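/- arXiv:1303.4007 — 2 statements merged into one kernel-verified Lean document; each statement's English description precedes it below -/
import Mathlib

section
/- Let k be an infinite field and let τ : SL₂(k) → ℂ be an extremal normalized character. If τ is not the constant function 1, then τ(g) = 0 for every g ∈ SL₂(k) that does not lie in the center of SL₂(k) (i.e. τ is induced from the center). -/
/-!
Let `τ` be a nontrivial extremal character of `SL₂(k)`. Applying the GNS construction to
`(g, h) ↦ τ (g * h⁻¹)` on `SL₂(k) × SL₂(k)` gives a unitary representation `ρ` and a unit vector
`ξ`, fixed by the diagonal subgroup, with `τ g = ⟪ξ, ρ (g, 1) ξ⟫`. Extremality says that `ξ` is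
orthogonal to the vectors invariant under the left factor (`inner_invariant_eq_zero`): otherwise `τ`
would dominate a positive multiple of the trivial character.

Two tools are used throughout. By the mean ergodic theorem, the projection onto the invariants of a
subgroup is a limit of averages, so matrix coefficients which are constant off a finite set have
that constant as their mean (`mean_eq`, `mean_eq_mean`). By Bessel's inequality, an infinite bounded
orthogonal family cannot have a constant nonzero inner product with one vector (`bessel_zero`).

Write `u`, `v`, `d`, `w` for upper unipotents, lower unipotents, diagonal matrices and the Weyl
element. In any unitary representation, matrix identities for `v c * d t` and `v c` together with
the mean ergodic theorem show that projecting a vector invariant under the upper triangular group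
to the `v`-invariants yields a vector invariant under all of `SL₂(k)` (`pj_SV_invariant`). For the
left action on the GNS space, Bessel's inequality shows that the `u`-mean of `ξ` is invariant under
the upper triangular group (`pj_fixed_mem_SB`). It follows that `ξ` is orthogonal to all vectors
invariant under `(v y, 1)` and `(1, u y)` for all `y` (`inner_left_right_eq_zero`).

For `l ≠ 0` consider the subgroup of the elements `(v (l * z), u z)`. Any two of these subgroups
commute and generate all `(v y, 1)` and `(1, u y)`, so the projections of `ξ` to their invariants
are pairwise orthogonal. The diagonally embedded `d t` permute these subgroups within a
fourth-power class of `l`, which is infinite, and fix `ξ`; by Bessel's inequality these projections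
vanish (`inner_SE_eq_zero`). Finally, a noncentral `g` is conjugate to an element `u x * w * d c`
(`exists_conj`), which conjugates upper to lower unipotents; hence `ρ (g⁻¹, 1) ξ` is invariant under
one of these subgroups, and `τ g = 0`.
-/

open scoped ComplexOrder

/-- A normalized character on a group: positive definite, conjugation invariant,
and taking the value `1` at the identity. -/
def IsCharacter {Γ : Type*} [Group Γ] (φ : Γ → ℂ) : Prop :=
  (∀ (n : ℕ) (lam : Fin n → ℂ) (g : Fin n → Γ),
      0 ≤ ∑ i, ∑ j, lam i * (starRingEnd ℂ) (lam j) * φ ((g j)⁻¹ * g i)) ∧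
  (∀ g h : Γ, φ (h * g * h⁻¹) = φ g) ∧
  φ 1 = 1

/-- An extremal normalized character: an extreme point (over `ℝ`) of the convex
set of normalized characters. -/
def IsExtremalCharacter {Γ : Type*} [Group Γ] (τ : Γ → ℂ) : Prop :=
  τ ∈ Set.extremePoints ℝ {φ : Γ → ℂ | IsCharacter φ}

namespace SL2Rigidity

/-! ### Means over unitary group actions -/

section Hilbert

variable {H : Type*} [NormedAddCommGroup H] [InnerProductSpace ℂ H] [CompleteSpace H]

/-- The closed subspace of vectors fixed by every operator in `A`. -/
def Inv (A : Set (H ≃ₗᵢ[ℂ] H)) : Submodule ℂ H where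
  carrier := {x | ∀ a ∈ A, a x = x}
  add_mem' := by
    intro x y hx hy a ha
    rw [map_add, hx a ha, hy a ha]
  zero_mem' := by
    intro a _
    exact map_zero a
  smul_mem' := by
    intro c x hx a ha
    rw [map_smul, hx a ha]

omit [CompleteSpace H] in
lemma mem_Inv {A : Set (H ≃ₗᵢ[ℂ] H)} {x : H} : x ∈ Inv A ↔ ∀ a ∈ A, a x = x := Iff.rfl

omit [CompleteSpace H] in
lemma isClosed_Inv (A : Set (H ≃ₗᵢ[ℂ] H)) : IsClosed (Inv A : Set H) := by
  have : (Inv A : Set H) = ⋂ a ∈ A, {x | a x = x} := by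
    ext x
    simp [mem_Inv]
  rw [this]
  exact isClosed_biInter fun a _ => isClosed_eq a.continuous continuous_id

instance (A : Set (H ≃ₗᵢ[ℂ] H)) : (Inv A).HasOrthogonalProjection :=
  haveI : CompleteSpace (Inv A) := (isClosed_Inv A).completeSpace_coe
  inferInstance

/-- The orthogonal projection onto `Inv A`, as a map `H → H`. -/
noncomputable def pj (A : Set (H ≃ₗᵢ[ℂ] H)) (x : H) : H := (Inv A).starProjection x

lemma pj_mem (A : Set (H ≃ₗᵢ[ℂ] H)) (x : H) : pj A x ∈ Inv A :=
  Submodule.starProjection_apply_mem _ _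

lemma pj_inner {A : Set (H ≃ₗᵢ[ℂ] H)} (x : H) {y : H} (hy : y ∈ Inv A) :
    inner ℂ (pj A x) y = inner ℂ x y := by
  have := Submodule.starProjection_inner_eq_zero (K := Inv A) x y hy
  rw [inner_sub_left, sub_eq_zero] at this
  exact this.symm

lemma inner_pj {A : Set (H ≃ₗᵢ[ℂ] H)} (x : H) {y : H} (hy : y ∈ Inv A) :
    inner ℂ y (pj A x) = inner ℂ y x := by
  rw [← inner_conj_symm, pj_inner x hy, inner_conj_symm]

lemma pj_inner_self (A : Set (H ≃ₗᵢ[ℂ] H)) (x : H) :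
    inner ℂ (pj A x) x = ((‖pj A x‖ ^ 2 : ℝ) : ℂ) := by
  rw [← inner_pj x (pj_mem A x), inner_self_eq_norm_sq_to_K]
  norm_cast

lemma pj_eq_zero {A : Set (H ≃ₗᵢ[ℂ] H)} {x : H} (h : inner ℂ (pj A x) x = 0) : pj A x = 0 := by
  rw [pj_inner_self] at h
  norm_cast at h
  simpa using h

/-- `pj A x` is the only `A`-invariant vector with the same inner products as `x` against all
`A`-invariant vectors. -/
lemma pj_unique {A : Set (H ≃ₗᵢ[ℂ] H)} {x y : H} (hy : y ∈ Inv A)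
    (h : ∀ z ∈ Inv A, inner ℂ x z = inner ℂ y z) : pj A x = y := by
  refine Submodule.eq_starProjection_of_mem_of_inner_eq_zero hy fun z hz => ?_
  rw [inner_sub_left, h z hz, sub_self]

/-- A unitary operator carrying `Inv A` onto `Inv A'` intertwines the two projections. -/
lemma map_pj {A A' : Set (H ≃ₗᵢ[ℂ] H)} (T : H ≃ₗᵢ[ℂ] H)
    (hT : ∀ x, T x ∈ Inv A' ↔ x ∈ Inv A) (x : H) : T (pj A x) = pj A' (T x) := by
  refine (pj_unique ((hT _).2 (pj_mem A x)) fun z hz => ?_).symm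
  obtain ⟨z, rfl⟩ := T.surjective z
  rw [T.inner_map_map, T.inner_map_map, pj_inner x ((hT z).1 hz)]

/-- Mean ergodic theorem (Alaoglu-Birkhoff): the projection of `x` onto the invariants is the point
of minimal norm in the closed convex hull of the orbit of `x`. In particular it is a limit of
averages of orbit points. -/
lemma pj_mem_hull {S : Type*} [Group S] (σ : S →* (H ≃ₗᵢ[ℂ] H)) (x : H) :
    pj (Set.range σ) x ∈ closedConvexHull ℝ (Set.range fun c => σ c x) := by
  let _ : InnerProductSpace ℝ H := InnerProductSpace.rclikeToReal ℂ H
  set C := closedConvexHull ℝ (Set.range fun c => σ c x) with hC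
  have hCc : Convex ℝ C := convex_closedConvexHull
  have hsub : (Set.range fun c => σ c x) ⊆ C := subset_closedConvexHull
  have hcl : IsClosed C := isClosed_closedConvexHull
  have hne : C.Nonempty := ⟨_, hsub ⟨1, rfl⟩⟩
  obtain ⟨m, hm, hmin⟩ := exists_norm_eq_iInf_of_complete_convex hne hcl.isComplete hCc 0
  rw [norm_eq_iInf_iff_real_inner_le_zero hCc hm] at hmin
  have hstab : ∀ c, ∀ y ∈ C, σ c y ∈ C := by
    intro c
    have : C ⊆ (σ c) ⁻¹' C := by
      refine closedConvexHull_min ?_ ?_ (hcl.preimage (σ c).continuous)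
      · rintro _ ⟨d, rfl⟩
        refine hsub ⟨c * d, ?_⟩
        simp
      · exact hCc.linear_preimage ((σ c).toLinearEquiv.toLinearMap.restrictScalars ℝ)
    exact this
  have hinv : m ∈ Inv (Set.range σ) := by
    rintro _ ⟨c, rfl⟩
    have h1 := hmin _ (hstab c m hm)
    have h2 : ‖σ c m - m‖ ^ 2 = 0 := by
      have h3 : ‖σ c m‖ = ‖m‖ := (σ c).norm_map m
      rw [@norm_sub_sq_real, h3]
      rw [zero_sub, inner_neg_left, inner_sub_right, real_inner_self_eq_norm_sq,
        real_inner_comm] at h1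
      have h4 : 0 ≤ ‖σ c m - m‖ ^ 2 := by positivity
      rw [@norm_sub_sq_real, h3] at h4
      linarith
    simpa [sub_eq_zero] using h2
  have hproj : C ⊆ {y | pj (Set.range σ) y = pj (Set.range σ) x} := by
    refine closedConvexHull_min ?_ ?_ ?_
    · rintro _ ⟨c, rfl⟩
      refine pj_unique (pj_mem _ _) fun z hz => ?_
      rw [pj_inner _ hz]
      conv_lhs => rw [← hz (σ c) ⟨c, rfl⟩]
      exact (σ c).inner_map_map _ _
    · exact (convex_singleton (pj (Set.range σ) x)).linear_preimage
        ((Inv (Set.range σ)).starProjection.toLinearMap.restrictScalars ℝ)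
    · exact isClosed_eq (Inv (Set.range σ)).starProjection.continuous continuous_const
  have : pj (Set.range σ) x = m := by
    rw [← hproj hm]
    exact Submodule.starProjection_eq_self_iff.2 hinv
  rw [this]
  exact hm

/-- If a matrix coefficient of an infinite group is equal to `κ` outside a finite set, then its mean
is `κ`. Summing over `n` translates, each point of the orbit meets the exceptional set at most
`E.card` times, so the deviation from `n * κ` stays bounded on the closed convex hull of the orbit
while it grows linearly in `n` at the invariant point of that hull. -/
lemma mean_eq {S : Type*} [Group S] [Infinite S] (σ : S →* (H ≃ₗᵢ[ℂ] H)) (E : Finset S)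
    (ξ ζ : H) (κ : ℂ) (h : ∀ c ∉ E, inner ℂ (σ c ξ) ζ = κ) :
    inner ℂ (pj (Set.range σ) ξ) ζ = κ := by
  classical
  set p := pj (Set.range σ) ξ with hp
  have hpm : p ∈ Inv (Set.range σ) := pj_mem _ _
  obtain ⟨K, hK0, hK⟩ : ∃ K : ℝ, 0 ≤ K ∧ ∀ c ∈ E, ‖inner ℂ (σ c ξ) ζ - κ‖ ≤ K :=
    ⟨∑ c ∈ E, ‖inner ℂ (σ c ξ) ζ - κ‖, Finset.sum_nonneg fun _ _ => norm_nonneg _,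
      fun c hc => Finset.single_le_sum (f := fun c => ‖inner ℂ (σ c ξ) ζ - κ‖)
        (fun _ _ => norm_nonneg _) hc⟩
  have key : ∀ n : ℕ, (n : ℝ) * ‖inner ℂ p ζ - κ‖ ≤ E.card * K := by
    intro n
    obtain ⟨F, hF⟩ := Infinite.exists_subset_card_eq S n
    have hsub : closedConvexHull ℝ (Set.range fun c => σ c ξ) ⊆
        {y | ‖∑ f ∈ F, (inner ℂ (σ f y) ζ - κ)‖ ≤ E.card * K} := by
      refine closedConvexHull_min ?_ ?_ ?_
      · rintro _ ⟨c, rfl⟩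
        have h1 : ∀ f ∈ F, (inner ℂ (σ f (σ c ξ)) ζ - κ) =
            if f * c ∈ E then (inner ℂ (σ (f * c) ξ) ζ - κ) else 0 := by
          intro f _
          split_ifs with hf
          · simp
          · rw [← h _ hf]
            simp
        show ‖∑ f ∈ F, (inner ℂ (σ f (σ c ξ)) ζ - κ)‖ ≤ E.card * K
        rw [Finset.sum_congr rfl h1, ← Finset.sum_filter]
        refine (norm_sum_le_of_le (f := fun f => (inner ℂ (σ (f * c) ξ) ζ - κ))
          (n := fun _ => K) _ fun f hf => hK _ (Finset.mem_filter.1 hf).2).trans ?_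
        rw [Finset.sum_const, nsmul_eq_mul]
        refine mul_le_mul_of_nonneg_right ?_ hK0
        norm_cast
        refine Finset.card_le_card_of_injOn (fun f => f * c) ?_ ?_
        · intro f hf
          exact (Finset.mem_filter.1 hf).2
        · intro a _ b _ hab
          exact mul_right_cancel hab
      · intro y hy z hz a b ha hb hab
        have h2 : ∑ f ∈ F, (inner ℂ (σ f (a • y + b • z)) ζ - κ) =
            a • ∑ f ∈ F, (inner ℂ (σ f y) ζ - κ) + b • ∑ f ∈ F, (inner ℂ (σ f z) ζ - κ) := by
          rw [Finset.smul_sum, Finset.smul_sum, ← Finset.sum_add_distrib]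
          refine Finset.sum_congr rfl fun f _ => ?_
          have h3 : (a : ℂ) + b = 1 := by exact_mod_cast hab
          have h4 : σ f (a • y + b • z) = (a : ℂ) • σ f y + (b : ℂ) • σ f z := by
            rw [← map_smul, ← map_smul, ← map_add]
            rfl
          rw [h4, inner_add_left, inner_smul_left, inner_smul_left]
          simp only [Complex.conj_ofReal, Complex.real_smul]
          linear_combination κ * h3
        show ‖_‖ ≤ _
        rw [h2]
        refine (norm_add_le _ _).trans ?_
        rw [norm_smul, norm_smul, Real.norm_of_nonneg ha, Real.norm_of_nonneg hb]
        have hy' : ‖∑ f ∈ F, (inner ℂ (σ f y) ζ - κ)‖ ≤ E.card * K := hy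
        have hz' : ‖∑ f ∈ F, (inner ℂ (σ f z) ζ - κ)‖ ≤ E.card * K := hz
        calc _ ≤ a * (E.card * K) + b * (E.card * K) := by gcongr
          _ = _ := by rw [← add_mul, hab, one_mul]
      · refine isClosed_le ?_ continuous_const
        refine continuous_norm.comp (continuous_finsetSum _ fun f _ => ?_)
        exact (Continuous.inner (σ f).continuous continuous_const).sub continuous_const
    have h5 : ‖∑ f ∈ F, (inner ℂ (σ f p) ζ - κ)‖ ≤ E.card * K := hsub (pj_mem_hull σ ξ)
    rw [Finset.sum_congr rfl fun f _ => by rw [hpm (σ f) ⟨f, rfl⟩], Finset.sum_const, hF,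
      nsmul_eq_mul, norm_mul, Complex.norm_natCast] at h5
    exact h5
  by_contra hne
  have hpos : 0 < ‖inner ℂ p ζ - κ‖ := norm_pos_iff.2 (sub_ne_zero.2 hne)
  obtain ⟨n, hn⟩ := exists_nat_gt (E.card * K / ‖inner ℂ p ζ - κ‖)
  rw [div_lt_iff₀ hpos] at hn
  exact absurd (key n) (not_le.2 hn)

/-- The direct sum of two unitary representations of the same group. -/
noncomputable def prodHom {S : Type*} [Group S] (σ₁ σ₂ : S →* (H ≃ₗᵢ[ℂ] H)) :
    S →* (WithLp 2 (H × H) ≃ₗᵢ[ℂ] WithLp 2 (H × H)) where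
  toFun c := LinearIsometryEquiv.withLpProdCongr 2 (σ₁ c) (σ₂ c)
  map_one' := by
    ext x
    rw [map_one, map_one]
    rfl
  map_mul' a b := by
    ext x
    rw [map_mul, map_mul]
    rfl

/-- Two matrix coefficients of an infinite group that agree outside a finite set have the same
mean: their difference is a coefficient of the direct sum. -/
lemma mean_eq_mean {S : Type*} [Group S] [Infinite S] (σ₁ σ₂ : S →* (H ≃ₗᵢ[ℂ] H)) (E : Finset S)
    (ξ₁ ζ₁ ξ₂ ζ₂ : H) (h : ∀ c ∉ E, inner ℂ (σ₁ c ξ₁) ζ₁ = inner ℂ (σ₂ c ξ₂) ζ₂) :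
    inner ℂ (pj (Set.range σ₁) ξ₁) ζ₁ = inner ℂ (pj (Set.range σ₂) ξ₂) ζ₂ := by
  have hmem : ∀ y : WithLp 2 (H × H), y ∈ Inv (Set.range (prodHom σ₁ σ₂)) ↔
      y.fst ∈ Inv (Set.range σ₁) ∧ y.snd ∈ Inv (Set.range σ₂) := by
    intro y
    constructor
    · intro hy
      constructor
      · rintro _ ⟨c, rfl⟩
        exact congrArg WithLp.fst (hy _ ⟨c, rfl⟩)
      · rintro _ ⟨c, rfl⟩
        exact congrArg WithLp.snd (hy _ ⟨c, rfl⟩)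
    · rintro ⟨h1, h2⟩ _ ⟨c, rfl⟩
      exact WithLp.ofLp_injective 2 (Prod.ext (h1 _ ⟨c, rfl⟩) (h2 _ ⟨c, rfl⟩))
  have h1 := mean_eq (prodHom σ₁ σ₂) E (WithLp.toLp 2 (ξ₁, ξ₂)) (WithLp.toLp 2 (ζ₁, -ζ₂)) 0 (by
    intro c hc
    rw [WithLp.prod_inner_apply]
    show inner ℂ (σ₁ c ξ₁) ζ₁ + inner ℂ (σ₂ c ξ₂) (-ζ₂) = 0
    rw [h c hc, inner_neg_right, add_neg_cancel])
  have h2 : pj (Set.range (prodHom σ₁ σ₂)) (WithLp.toLp 2 (ξ₁, ξ₂)) =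
      WithLp.toLp 2 (pj (Set.range σ₁) ξ₁, pj (Set.range σ₂) ξ₂) := by
    refine pj_unique ((hmem _).2 ⟨pj_mem _ _, pj_mem _ _⟩) fun z hz => ?_
    obtain ⟨hz1, hz2⟩ := (hmem z).1 hz
    rw [WithLp.prod_inner_apply, WithLp.prod_inner_apply]
    show inner ℂ ξ₁ z.fst + inner ℂ ξ₂ z.snd =
      inner ℂ (pj (Set.range σ₁) ξ₁) z.fst + inner ℂ (pj (Set.range σ₂) ξ₂) z.snd
    rw [pj_inner _ hz1, pj_inner _ hz2]
  rw [h2, WithLp.prod_inner_apply] at h1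
  change inner ℂ (pj (Set.range σ₁) ξ₁) ζ₁ + inner ℂ (pj (Set.range σ₂) ξ₂) (-ζ₂) = 0 at h1
  rwa [inner_neg_right, add_neg_eq_zero] at h1

omit [CompleteSpace H] in
/-- By Bessel, infinitely many bounded, pairwise orthogonal vectors cannot all have the same
nonzero inner product with a given vector. -/
lemma bessel_zero {ι : Type*} [Infinite ι] (f : ι → H) (ξ : H) (R : ℝ) (a : ℂ)
    (hR : ∀ i, ‖f i‖ ≤ R) (horth : ∀ i j, i ≠ j → inner ℂ (f i) (f j) = 0)
    (ha : ∀ i, inner ℂ (f i) ξ = a) : a = 0 := by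
  classical
  have key : ∀ n : ℕ, (n : ℝ) * ‖a‖ ^ 2 ≤ R ^ 2 * ‖ξ‖ ^ 2 := by
    intro n
    obtain ⟨F, hF⟩ := Infinite.exists_subset_card_eq ι n
    have h1 : inner ℂ (∑ i ∈ F, f i) ξ = n * a := by
      rw [sum_inner, Finset.sum_congr rfl fun i _ => ha i, Finset.sum_const, hF, nsmul_eq_mul]
    have h2 : ‖∑ i ∈ F, f i‖ ^ 2 ≤ n * R ^ 2 := by
      have : ‖∑ i ∈ F, f i‖ ^ 2 = ∑ i ∈ F, ‖f i‖ ^ 2 := by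
        have h3 : (inner ℂ (∑ i ∈ F, f i) (∑ i ∈ F, f i) : ℂ) = ∑ i ∈ F, inner ℂ (f i) (f i) := by
          rw [sum_inner]
          refine Finset.sum_congr rfl fun i hi => ?_
          rw [inner_sum, Finset.sum_eq_single i]
          · intro j _ hj
            exact horth i j hj.symm
          · exact fun h => absurd hi h
        simp only [inner_self_eq_norm_sq_to_K] at h3
        exact_mod_cast h3
      rw [this, ← hF, ← nsmul_eq_mul, ← Finset.sum_const]
      refine Finset.sum_le_sum fun i _ => ?_
      have := hR i
      gcongr
    have h4 : ‖(n : ℂ) * a‖ ≤ ‖∑ i ∈ F, f i‖ * ‖ξ‖ := by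
      rw [← h1]
      exact norm_inner_le_norm _ _
    rw [norm_mul, Complex.norm_natCast] at h4
    have h5 : ((n : ℝ) * ‖a‖) ^ 2 ≤ n * R ^ 2 * ‖ξ‖ ^ 2 := by
      calc _ ≤ (‖∑ i ∈ F, f i‖ * ‖ξ‖) ^ 2 := by gcongr
        _ = ‖∑ i ∈ F, f i‖ ^ 2 * ‖ξ‖ ^ 2 := by ring
        _ ≤ _ := by gcongr
    rcases Nat.eq_zero_or_pos n with rfl | hn
    · simp
      positivity
    · have hn' : (0 : ℝ) < n := by exact_mod_cast hn
      refine le_of_mul_le_mul_left ?_ hn'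
      linarith
  by_contra hne
  have hpos : 0 < ‖a‖ ^ 2 := by positivity
  obtain ⟨n, hn⟩ := exists_nat_gt (R ^ 2 * ‖ξ‖ ^ 2 / ‖a‖ ^ 2)
  rw [div_lt_iff₀ hpos] at hn
  exact absurd (key n) (not_le.2 hn)

end Hilbert

/-! ### Matrix identities in `SL₂(k)` -/

section Group

variable {k : Type*} [Field k]

/-- The upper unipotent matrix with off-diagonal entry `x`. -/
def u (x : k) : Matrix.SpecialLinearGroup (Fin 2) k :=
  ⟨!![1, x; 0, 1], by simp [Matrix.det_fin_two]⟩

/-- The lower unipotent matrix with off-diagonal entry `x`. -/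
def v (x : k) : Matrix.SpecialLinearGroup (Fin 2) k :=
  ⟨!![1, 0; x, 1], by simp [Matrix.det_fin_two]⟩

/-- The diagonal matrix with entries `t` and `t⁻¹`. -/
def d (t : kˣ) : Matrix.SpecialLinearGroup (Fin 2) k :=
  ⟨!![(t : k), 0; 0, ((t⁻¹ : kˣ) : k)], by simp [Matrix.det_fin_two]⟩

/-- The Weyl element, `!![0, -1; 1, 0]`. -/
def w : Matrix.SpecialLinearGroup (Fin 2) k :=
  ⟨!![0, -1; 1, 0], by simp [Matrix.det_fin_two]⟩

lemma coe_u (x : k) : (u x : Matrix (Fin 2) (Fin 2) k) = !![1, x; 0, 1] := rfl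

lemma coe_v (x : k) : (v x : Matrix (Fin 2) (Fin 2) k) = !![1, 0; x, 1] := rfl

lemma coe_d (t : kˣ) :
    (d t : Matrix (Fin 2) (Fin 2) k) = !![(t : k), 0; 0, ((t⁻¹ : kˣ) : k)] := rfl

lemma coe_w : ((w : Matrix.SpecialLinearGroup (Fin 2) k) : Matrix (Fin 2) (Fin 2) k) =
    !![0, -1; 1, 0] := rfl

lemma u_add (x y : k) : u (x + y) = u x * u y := by
  ext i j
  fin_cases i <;> fin_cases j <;> simp [coe_u, Matrix.mul_apply, Fin.sum_univ_two, add_comm]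

lemma v_add (x y : k) : v (x + y) = v x * v y := by
  ext i j
  fin_cases i <;> fin_cases j <;> simp [coe_v, Matrix.mul_apply, Fin.sum_univ_two, add_comm]

lemma u_zero : u (0 : k) = 1 := by
  ext i j
  fin_cases i <;> fin_cases j <;> simp [coe_u]

lemma v_zero : v (0 : k) = 1 := by
  ext i j
  fin_cases i <;> fin_cases j <;> simp [coe_v]

lemma u_neg (x : k) : u (-x) = (u x)⁻¹ :=
  eq_inv_of_mul_eq_one_left (by rw [← u_add, neg_add_cancel, u_zero])

lemma v_neg (x : k) : v (-x) = (v x)⁻¹ :=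
  eq_inv_of_mul_eq_one_left (by rw [← v_add, neg_add_cancel, v_zero])

lemma d_mul (s t : kˣ) : d (s * t) = d s * d t := by
  ext i j
  fin_cases i <;> fin_cases j <;> simp [coe_d, Matrix.mul_apply, Fin.sum_univ_two, mul_comm]

lemma d_inv_mul (t : kˣ) : d t⁻¹ * d t = 1 := by
  ext i j
  fin_cases i <;> fin_cases j <;> simp [coe_d, Matrix.mul_apply, Fin.sum_univ_two]

lemma d_inv (t : kˣ) : d t⁻¹ = (d t)⁻¹ := eq_inv_of_mul_eq_one_left (d_inv_mul t)

/-- `u` as a homomorphism from the additive group of `k`. -/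
def uHom : Multiplicative k →* Matrix.SpecialLinearGroup (Fin 2) k where
  toFun x := u x.toAdd
  map_one' := u_zero
  map_mul' _ _ := u_add _ _

/-- `v` as a homomorphism from the additive group of `k`. -/
def vHom : Multiplicative k →* Matrix.SpecialLinearGroup (Fin 2) k where
  toFun x := v x.toAdd
  map_one' := v_zero
  map_mul' _ _ := v_add _ _

/-- The homomorphism `z ↦ v (s * z)`. -/
def vHomMul (s : k) : Multiplicative k →* Matrix.SpecialLinearGroup (Fin 2) k where
  toFun x := v (s * x.toAdd)
  map_one' := by
    show v (s * 0) = 1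
    rw [mul_zero, v_zero]
  map_mul' x y := by
    show v (s * (x.toAdd + y.toAdd)) = _
    rw [mul_add, v_add]

lemma d_u (t : kˣ) (x : k) : d t * u x = u (t ^ 2 * x) * d t := by
  ext i j
  fin_cases i <;> fin_cases j <;> simp [coe_d, coe_u, Matrix.mul_apply, Fin.sum_univ_two]
  field_simp

lemma v_d (t : kˣ) (x : k) : v x * d t = d t * v (t ^ 2 * x) := by
  ext i j
  fin_cases i <;> fin_cases j <;> simp [coe_d, coe_v, Matrix.mul_apply, Fin.sum_univ_two]
  field_simp

/-- Modulo the upper unipotents on both sides, right multiplication by `d t` acts on lower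
unipotents as the dilation by `t`. -/
lemma v_mul_d (t : kˣ) (c : k) (hc : c ≠ 0) :
    ∃ x y : k, v c * d t = u x * v (t * c) * u y := by
  refine ⟨(t - 1) / (c * t), (t⁻¹ - 1) / (c * t), ?_⟩
  have ht : (t : k) ≠ 0 := t.ne_zero
  ext i j
  fin_cases i <;> fin_cases j <;>
    simp [coe_d, coe_u, coe_v, Matrix.mul_apply, Fin.sum_univ_two] <;> field_simp <;> ring

lemma v_eq (c : kˣ) : v (c : k) = u (c⁻¹ : k) * (w * d c) * u (c⁻¹ : k) := by
  have ht : (c : k) ≠ 0 := c.ne_zero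
  ext i j
  fin_cases i <;> fin_cases j <;>
    simp [coe_d, coe_u, coe_v, coe_w, Matrix.mul_apply, Fin.sum_univ_two]

lemma w_u (x : k) : w * u x = v (-x) * w := by
  ext i j
  fin_cases i <;> fin_cases j <;> simp [coe_u, coe_v, coe_w, Matrix.mul_apply, Fin.sum_univ_two]

lemma w_v (x : k) : w * v x = u (-x) * w := by
  ext i j
  fin_cases i <;> fin_cases j <;> simp [coe_u, coe_v, coe_w, Matrix.mul_apply, Fin.sum_univ_two]

lemma w_d (t : kˣ) : w * d t = d t⁻¹ * w := by
  ext i j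
  fin_cases i <;> fin_cases j <;> simp [coe_d, coe_w, Matrix.mul_apply, Fin.sum_univ_two]

lemma w_w : w * w = d (-1 : kˣ) := by
  ext i j
  fin_cases i <;> fin_cases j <;> simp [coe_d, coe_w, Matrix.mul_apply, Fin.sum_univ_two]

lemma lower_ne_zero_eq (g : Matrix.SpecialLinearGroup (Fin 2) k) (hc : g.1 1 0 ≠ 0) :
    ∃ x y : k, g = u x * v (g.1 1 0) * u y := by
  refine ⟨(g.1 0 0 - 1) / g.1 1 0, (g.1 1 1 - 1) / g.1 1 0, ?_⟩
  have hdet := g.2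
  rw [Matrix.det_fin_two] at hdet
  ext i j
  fin_cases i <;> fin_cases j <;>
    simp [coe_u, coe_v, Matrix.mul_apply, Fin.sum_univ_two] <;> field_simp <;> try ring1
  linear_combination -hdet

/-- The group is generated by its upper and lower unipotents. -/
lemma closure_uv (P : Subgroup (Matrix.SpecialLinearGroup (Fin 2) k)) (hu : ∀ x, u x ∈ P) (hv : ∀ x, v x ∈ P)
    (g : Matrix.SpecialLinearGroup (Fin 2) k) : g ∈ P := by
  have key : ∀ g : Matrix.SpecialLinearGroup (Fin 2) k, g.1 1 0 ≠ 0 → g ∈ P := by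
    intro g hg
    obtain ⟨x, y, h⟩ := lower_ne_zero_eq g hg
    rw [h]
    exact P.mul_mem (P.mul_mem (hu _) (hv _)) (hu _)
  by_cases hg : g.1 1 0 = 0
  · have h1 : (g * v 1).1 1 0 ≠ 0 := by
      have hdet := g.2
      rw [Matrix.det_fin_two, hg, mul_zero, sub_zero] at hdet
      have : g.1 1 1 ≠ 0 := right_ne_zero_of_mul_eq_one hdet
      simpa [coe_v, Matrix.mul_apply, Fin.sum_univ_two, hg] using this
    have h2 := P.mul_mem (key _ h1) (hv (-1))
    rwa [v_neg, mul_inv_cancel_right] at h2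
  · exact key g hg

/-- Every noncentral element is conjugate to a matrix whose lower right entry vanishes, that is, to
one of the form `u x * w * d c`. -/
lemma exists_conj (g : Matrix.SpecialLinearGroup (Fin 2) k) (hg : g ∉ Subgroup.center (Matrix.SpecialLinearGroup (Fin 2) k)) :
    ∃ (h : Matrix.SpecialLinearGroup (Fin 2) k) (x : k) (c : kˣ), h * g * h⁻¹ = u x * (w * d c) := by
  have hdet := g.2
  rw [Matrix.det_fin_two] at hdet
  have key : ∀ h : Matrix.SpecialLinearGroup (Fin 2) k, (h * g * h⁻¹).1 1 1 = 0 → 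
      ∃ (h : Matrix.SpecialLinearGroup (Fin 2) k) (x : k) (c : kˣ), h * g * h⁻¹ = u x * (w * d c) := by
    intro h h0
    have hdet' := (h * g * h⁻¹).2
    rw [Matrix.det_fin_two, h0, mul_zero, zero_sub] at hdet'
    have hne : (h * g * h⁻¹).1 1 0 ≠ 0 := by
      intro h1
      rw [h1] at hdet'
      simp at hdet'
    refine ⟨h, (h * g * h⁻¹).1 0 0 / (h * g * h⁻¹).1 1 0, Units.mk0 _ hne, ?_⟩
    generalize h * g * h⁻¹ = m at *
    ext i j
    fin_cases i <;> fin_cases j <;>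
      simp [coe_d, coe_u, coe_w, Matrix.mul_apply, Fin.sum_univ_two, h0]
    · field_simp
    · field_simp
      linear_combination -hdet'
  -- each conjugator below is chosen to kill the lower right entry
  by_cases hc : g.1 1 0 = 0
  · by_cases hb : g.1 0 1 = 0
    · by_cases had : g.1 0 0 = g.1 1 1
      · exfalso
        apply hg
        rw [Matrix.SpecialLinearGroup.mem_center_iff]
        refine ⟨g.1 0 0, ?_, ?_⟩
        · rw [hc, ← had] at hdet
          simp [sq]
          linear_combination hdet
        · ext i j
          fin_cases i <;> fin_cases j <;> simp [hb, hc, had]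
      · have hne : g.1 0 0 - g.1 1 1 ≠ 0 := sub_ne_zero.2 had
        refine key (u (g.1 1 1 / (g.1 0 0 - g.1 1 1)) * v 1) ?_
        simp [coe_u, coe_v, Matrix.mul_apply, Fin.sum_univ_two, hb, hc, Matrix.adjugate_fin_two,
          Matrix.vecMul, dotProduct]
        field_simp
        ring
    · refine key (v (-(g.1 1 1 / g.1 0 1))) ?_
      simp [coe_v, Matrix.mul_apply, Fin.sum_univ_two, Matrix.adjugate_fin_two,
        Matrix.vecMul, dotProduct]
      field_simp
      ring
  · refine key (u (g.1 1 1 / g.1 1 0)) ?_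
    simp [coe_u, Matrix.mul_apply, Fin.sum_univ_two, Matrix.adjugate_fin_two,
      Matrix.vecMul, dotProduct]
    field_simp
    ring

end Group

/-! ### The GNS construction -/

section GNS

open UniformSpace

/-- The extension by continuity of an isometric action on a seminormed space to a unitary
representation on the completion. -/
noncomputable def completionRep {Γ E : Type*} [Group Γ] [SeminormedAddCommGroup E]
    [InnerProductSpace ℂ E] (T : Γ → E →ₗᵢ[ℂ] E) (h1 : ∀ x, T 1 x = x)
    (hmul : ∀ g h x, T (g * h) x = T g (T h x)) : Γ →* (Completion E ≃ₗᵢ[ℂ] Completion E) :=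
  have hc : ∀ g, Continuous (Completion.map (T g)) := fun g => Completion.continuous_map
  have hcoe : ∀ g (x : E), Completion.map (T g) (x : Completion E) = (T g x : E) := fun g x =>
    Completion.map_coe (T g).isometry.uniformContinuous x
  have hm : ∀ g h (x : Completion E),
      Completion.map (T (g * h)) x = Completion.map (T g) (Completion.map (T h) x) := fun g h x =>
    Completion.induction_on x (isClosed_eq (hc _) ((hc g).comp (hc h))) fun x => by
      rw [hcoe, hcoe, hcoe, hmul]
  have ho : ∀ x : Completion E, Completion.map (T 1) x = x := fun x =>
    Completion.induction_on x (isClosed_eq (hc _) continuous_id) fun x => by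
      rw [hcoe, h1]
  { toFun := fun g =>
      { toFun := Completion.map (T g)
        invFun := Completion.map (T g⁻¹)
        left_inv := fun x => by rw [← hm, inv_mul_cancel, ho]
        right_inv := fun x => by rw [← hm, mul_inv_cancel, ho]
        map_add' := fun x y => Completion.induction_on₂ x y
          (isClosed_eq ((hc g).comp (continuous_fst.add continuous_snd))
            (((hc g).comp continuous_fst).add ((hc g).comp continuous_snd))) fun x y => by
            rw [← Completion.coe_add, hcoe, hcoe, hcoe, map_add, Completion.coe_add]
        map_smul' := fun c x => Completion.induction_on x
          (isClosed_eq ((hc g).comp (continuous_const_smul c)) ((hc g).const_smul c)) fun x => by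
            rw [← Completion.coe_smul, hcoe, hcoe, map_smul, Completion.coe_smul]
            rfl
        norm_map' := fun x => Completion.induction_on x
          (isClosed_eq (continuous_norm.comp (hc g)) continuous_norm) fun x => by
            show ‖Completion.map (T g) (x : Completion E)‖ = _
            rw [hcoe, Completion.norm_coe, Completion.norm_coe, (T g).norm_map] }
    map_one' := by
      ext x
      exact ho x
    map_mul' := fun g h => by
      ext x
      exact hm g h x }

lemma completionRep_coe {Γ E : Type*} [Group Γ] [SeminormedAddCommGroup E]
    [InnerProductSpace ℂ E] (T : Γ → E →ₗᵢ[ℂ] E) (h1 : ∀ x, T 1 x = x)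
    (hmul : ∀ g h x, T (g * h) x = T g (T h x)) (g : Γ) (x : E) :
    completionRep T h1 hmul g (x : Completion E) = (T g x : E) :=
  Completion.map_coe (T g).isometry.uniformContinuous x

/-- Positive definite functions on a group. -/
def PosDef {Γ : Type*} [Group Γ] (Φ : Γ → ℂ) : Prop :=
  ∀ (n : ℕ) (lam : Fin n → ℂ) (g : Fin n → Γ),
    0 ≤ ∑ i, ∑ j, lam i * (starRingEnd ℂ) (lam j) * Φ ((g j)⁻¹ * g i)

variable {Γ : Type*} [Group Γ] {Φ : Γ → ℂ}

/-- A positive definite function is Hermitian; this uses the definition for the coefficient vectors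
`(1, 1)` and `(1, i)`. -/
lemma PosDef.conj (h : PosDef Φ) (g : Γ) : (starRingEnd ℂ) (Φ g⁻¹) = Φ g := by
  have h1 := h 1 ![1] ![1]
  have h2 := h 2 ![1, 1] ![1, g]
  have h3 := h 2 ![1, Complex.I] ![1, g]
  simp [Fin.sum_univ_two, Complex.le_def] at h1 h2 h3
  apply Complex.ext
  · simp
    linarith [h1.2, h2.2, h3.2]
  · simp
    linarith [h1.2, h2.2, h3.2]

lemma PosDef.finsupp (h : PosDef Φ) (f : Γ →₀ ℂ) :
    0 ≤ f.sum fun g a => f.sum fun g' b => (starRingEnd ℂ) a * b * Φ (g⁻¹ * g') := by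
  have := h _ (fun i => f (f.support.equivFin.symm i)) (fun i => f.support.equivFin.symm i)
  have key : ∀ F : Γ → ℂ, ∑ i, F (f.support.equivFin.symm i) = ∑ x ∈ f.support, F x := by
    intro F
    rw [← Finset.sum_coe_sort f.support]
    exact Equiv.sum_comp f.support.equivFin.symm fun x : f.support => F x
  rw [Finset.sum_comm] at this
  simp only [Finsupp.sum]
  convert this using 1
  rw [key fun x => ∑ i, f (f.support.equivFin.symm i) * (starRingEnd ℂ) (f x) *
    Φ (x⁻¹ * f.support.equivFin.symm i)]
  refine Finset.sum_congr rfl fun x _ => ?_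
  rw [key fun y => f y * (starRingEnd ℂ) (f x) * Φ (x⁻¹ * y)]
  refine Finset.sum_congr rfl fun y _ => ?_
  rw [mul_comm (f y)]

/-- The semi-inner product on the free vector space over `Γ` for which `δ_g` and `δ_h` have inner
product `Φ (g⁻¹ * h)`. -/
noncomputable abbrev gnsCore (h : PosDef Φ) : PreInnerProductSpace.Core ℂ (Γ →₀ ℂ) where
  inner f f' := f.sum fun g a => f'.sum fun g' b => (starRingEnd ℂ) a * b * Φ (g⁻¹ * g')
  conj_inner_symm f f' := by
    rw [Finsupp.sum_comm]
    simp only [map_finsuppSum, map_mul, Complex.conj_conj]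
    refine Finset.sum_congr rfl fun g _ => Finset.sum_congr rfl fun g' _ => ?_
    show _ * (starRingEnd ℂ) (Φ (g'⁻¹ * g)) = _ * _ * Φ (g⁻¹ * g')
    rw [← h.conj (g⁻¹ * g'), mul_inv_rev, inv_inv, mul_comm (f' g')]
  re_inner_nonneg f := (Complex.le_def.1 (h.finsupp f)).1
  add_left f₁ f₂ f' := by
    refine Finsupp.sum_add_index' (fun g => ?_) fun g a b => ?_
    · simp
    · simp [add_mul, Finsupp.sum_add]
  smul_left f f' c := by
    show (c • f).sum _ = _ * f.sum _
    rw [Finsupp.sum_smul_index (fun g => by simp), Finsupp.mul_sum]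
    refine Finsupp.sum_congr fun g _ => ?_
    rw [Finsupp.mul_sum]
    refine Finsupp.sum_congr fun g' _ => ?_
    simp only [map_mul]
    ring

/-- The GNS construction: a positive definite function is a diagonal matrix coefficient of a unitary
representation. The space is the completion of the free vector space over `Γ`. -/
theorem exists_gns.{r} {Γ : Type r} [Group Γ] {Φ : Γ → ℂ} (h : PosDef Φ) :
    ∃ (H : Type r) (_ : NormedAddCommGroup H) (_ : InnerProductSpace ℂ H) (_ : CompleteSpace H)
      (ρ : Γ →* (H ≃ₗᵢ[ℂ] H)) (ξ : H), ∀ g, inner ℂ ξ (ρ g ξ) = Φ g := by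
  let c := gnsCore h
  let _ : SeminormedAddCommGroup (Γ →₀ ℂ) :=
    @InnerProductSpace.Core.toSeminormedAddCommGroup ℂ _ _ _ _ c
  let _ : InnerProductSpace ℂ (Γ →₀ ℂ) := InnerProductSpace.ofCore c
  have hin : ∀ f f' : Γ →₀ ℂ, (inner ℂ f f' : ℂ) =
    f.sum fun g a => f'.sum fun g' b => (starRingEnd ℂ) a * b * Φ (g⁻¹ * g') := fun _ _ => rfl
  let L : Γ → (Γ →₀ ℂ) →ₗ[ℂ] (Γ →₀ ℂ) := fun g => Finsupp.lmapDomain ℂ ℂ (g * ·)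
  have hL : ∀ g f f', inner ℂ (L g f) (L g f') = inner ℂ f f' := by
    intro g f f'
    rw [hin, hin]
    show (Finsupp.mapDomain (g * ·) f).sum _ = _
    rw [Finsupp.sum_mapDomain_index_inj (mul_right_injective g)]
    refine Finsupp.sum_congr fun x _ => ?_
    show (Finsupp.mapDomain (g * ·) f').sum _ = _
    rw [Finsupp.sum_mapDomain_index_inj (mul_right_injective g)]
    refine Finsupp.sum_congr fun y _ => ?_
    rw [show (g * x)⁻¹ * (g * y) = x⁻¹ * y by group]
  let T : Γ → (Γ →₀ ℂ) →ₗᵢ[ℂ] (Γ →₀ ℂ) := fun g => (L g).isometryOfInner (hL g)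
  have h1 : ∀ x, T 1 x = x := by
    intro x
    show Finsupp.mapDomain (1 * ·) x = x
    simp only [one_mul]
    exact Finsupp.mapDomain_id
  have hmul : ∀ a b x, T (a * b) x = T a (T b x) := by
    intro a b x
    show Finsupp.mapDomain (a * b * ·) x = Finsupp.mapDomain (a * ·) (Finsupp.mapDomain (b * ·) x)
    rw [← Finsupp.mapDomain_comp]
    congr 1
    ext y
    exact mul_assoc _ _ _
  refine ⟨Completion (Γ →₀ ℂ), inferInstance, inferInstance, inferInstance,
    completionRep T h1 hmul, ((Finsupp.single 1 1 : Γ →₀ ℂ) : Completion (Γ →₀ ℂ)), fun g => ?_⟩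
  rw [completionRep_coe, Completion.inner_coe, hin]
  show Finsupp.sum _ (fun x a => (Finsupp.mapDomain (g * ·) (Finsupp.single 1 1)).sum _) = _
  rw [Finsupp.mapDomain_single]
  simp

end GNS

/-! ### Unitary representations of `SL₂(k)` -/

section Rep

variable {k : Type*} [Field k]
variable {H : Type*} [NormedAddCommGroup H] [InnerProductSpace ℂ H]


lemma rep_mul {Γ : Type*} [Group Γ] (π : Γ →* (H ≃ₗᵢ[ℂ] H)) (a b : Γ) (x : H) :
    π (a * b) x = π a (π b x) := by
  rw [map_mul]
  rfl

lemma rep_one {Γ : Type*} [Group Γ] (π : Γ →* (H ≃ₗᵢ[ℂ] H)) (x : H) : π 1 x = x := by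
  rw [map_one]
  rfl

lemma rep_inv {Γ : Type*} [Group Γ] (π : Γ →* (H ≃ₗᵢ[ℂ] H)) (a : Γ) (x : H) :
    π a⁻¹ (π a x) = x := by
  rw [← rep_mul, inv_mul_cancel, rep_one]

lemma rep_inv' {Γ : Type*} [Group Γ] (π : Γ →* (H ≃ₗᵢ[ℂ] H)) (a : Γ) (x : H) :
    π a (π a⁻¹ x) = x := by
  rw [← rep_mul, mul_inv_cancel, rep_one]

lemma rep_inner {Γ : Type*} [Group Γ] (π : Γ →* (H ≃ₗᵢ[ℂ] H)) (a : Γ) (x y : H) :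
    inner ℂ (π a x) y = inner ℂ x (π a⁻¹ y) := by
  rw [← (π a).inner_map_map x, rep_inv']

/-- The operators by which the upper unipotents act. -/
def SU (π : Matrix.SpecialLinearGroup (Fin 2) k →* (H ≃ₗᵢ[ℂ] H)) : Set (H ≃ₗᵢ[ℂ] H) := Set.range (π.comp uHom)

/-- The operators by which the lower unipotents act. -/
def SV (π : Matrix.SpecialLinearGroup (Fin 2) k →* (H ≃ₗᵢ[ℂ] H)) : Set (H ≃ₗᵢ[ℂ] H) := Set.range (π.comp vHom)

/-- The operators by which the upper unipotents and the diagonal matrices act; its invariants are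
those of the upper triangular subgroup. -/
def SB (π : Matrix.SpecialLinearGroup (Fin 2) k →* (H ≃ₗᵢ[ℂ] H)) : Set (H ≃ₗᵢ[ℂ] H) := SU π ∪ Set.range fun t => π (d t)

variable {π : Matrix.SpecialLinearGroup (Fin 2) k →* (H ≃ₗᵢ[ℂ] H)}

lemma mem_SU {x : H} : x ∈ Inv (SU π) ↔ ∀ y, π (u y) x = x := by
  constructor
  · intro h y
    exact h _ ⟨Multiplicative.ofAdd y, rfl⟩
  · rintro h _ ⟨y, rfl⟩
    exact h _

lemma mem_SV {x : H} : x ∈ Inv (SV π) ↔ ∀ y, π (v y) x = x := by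
  constructor
  · intro h y
    exact h _ ⟨Multiplicative.ofAdd y, rfl⟩
  · rintro h _ ⟨y, rfl⟩
    exact h _

lemma mem_SB {x : H} : x ∈ Inv (SB π) ↔ x ∈ Inv (SU π) ∧ ∀ t, π (d t) x = x := by
  constructor
  · intro h
    exact ⟨fun a ha => h a (Or.inl ha), fun t => h _ (Or.inr ⟨t, rfl⟩)⟩
  · rintro ⟨h1, h2⟩ a (ha | ⟨t, rfl⟩)
    · exact h1 a ha
    · exact h2 t

lemma d_mem_SU {x : H} (hx : x ∈ Inv (SU π)) (t : kˣ) : π (d t) x ∈ Inv (SU π) := by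
  rw [mem_SU] at hx ⊢
  intro y
  have h := d_u t⁻¹ y
  have h2 : u y * d t = d t * u (((t⁻¹ : kˣ) : k) ^ 2 * y) := by
    rw [← mul_left_inj (d t⁻¹), ← mul_right_inj (d t⁻¹)] 
    rw [mul_assoc, mul_assoc, ← d_mul, mul_inv_cancel, ← mul_assoc, ← mul_assoc, ← mul_assoc,
      ← d_mul, inv_mul_cancel, h]
    have : d (1 : kˣ) = (1 : Matrix.SpecialLinearGroup (Fin 2) k) := by
      have := d_inv_mul (1 : kˣ)
      rwa [← d_mul, inv_one, one_mul] at this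
    rw [this, one_mul, mul_one]
  rw [← rep_mul, h2, rep_mul, hx]

lemma d_mem_SV {x : H} (hx : x ∈ Inv (SV π)) (t : kˣ) : π (d t) x ∈ Inv (SV π) := by
  rw [mem_SV] at hx ⊢
  intro y
  rw [← rep_mul, v_d, rep_mul, hx]

lemma d_mem_SV_iff {x : H} (t : kˣ) : π (d t) x ∈ Inv (SV π) ↔ x ∈ Inv (SV π) := by
  refine ⟨fun h => ?_, fun h => d_mem_SV h t⟩
  have := d_mem_SV h t⁻¹
  rwa [d_inv, rep_inv] at this

lemma w_mem_SV {x : H} (hx : x ∈ Inv (SU π)) : π w x ∈ Inv (SV π) := by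
  rw [mem_SV]
  rw [mem_SU] at hx
  intro y
  have := w_u (-y)
  rw [neg_neg] at this
  rw [← rep_mul, ← this, rep_mul, hx]

lemma winv_mem_SU {x : H} (hx : x ∈ Inv (SV π)) : π w⁻¹ x ∈ Inv (SU π) := by
  rw [mem_SU]
  rw [mem_SV] at hx
  intro y
  have h : u y * w⁻¹ = w⁻¹ * v (-y) := by
    rw [eq_inv_mul_iff_mul_eq, ← mul_assoc, w_u, mul_inv_cancel_right]
  rw [← rep_mul, h, rep_mul, hx]


/-- The hypothesis says that `x - y` is orthogonal to itself. -/
lemma eq_of_inner_sub {x y : H} (h : inner ℂ (x - y) x = inner ℂ (x - y) y) : x = y := by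
  rw [← sub_eq_zero, ← inner_sub_right, inner_self_eq_zero, sub_eq_zero] at h
  exact h

variable [CompleteSpace H]

lemma pj_congr {A A' : Set (H ≃ₗᵢ[ℂ] H)} (h : ∀ x, x ∈ Inv A' ↔ x ∈ Inv A) (x : H) :
    pj A x = pj A' x :=
  map_pj (LinearIsometryEquiv.refl ℂ H) h x

lemma pj_of_mem {A : Set (H ≃ₗᵢ[ℂ] H)} {x : H} (hx : x ∈ Inv A) : pj A x = x :=
  pj_unique hx fun _ _ => rfl

lemma pj_sub (A : Set (H ≃ₗᵢ[ℂ] H)) (x y : H) : pj A (x - y) = pj A x - pj A y :=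
  map_sub (Inv A).starProjection x y

section Infinite
variable [Infinite k]

/-- On upper-unipotent invariant vectors, the form given by the projection onto the
lower-unipotent invariants does not see the diagonal matrices. Both sides are means over `c` of
`v c`, once with the parameter dilated by `t`. -/
lemma inner_pj_d {ξ ζ : H} (hξ : ξ ∈ Inv (SU π)) (hζ : ζ ∈ Inv (SU π)) (t : kˣ) :
    inner ℂ (pj (SV π) (π (d t) ξ)) ζ = inner ℂ (pj (SV π) ξ) ζ := by
  have h1 := mean_eq_mean (π.comp vHom) (π.comp (vHomMul (t : k))) {1} (π (d t) ξ) ζ ξ ζ (by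
    intro c hc
    have hc' : c.toAdd ≠ 0 := fun h => hc (Finset.mem_singleton.2 h)
    obtain ⟨x, y, hxy⟩ := v_mul_d t c.toAdd hc'
    show inner ℂ (π (v c.toAdd) (π (d t) ξ)) ζ = inner ℂ (π (v (t * c.toAdd)) ξ) ζ
    rw [← rep_mul, hxy, rep_mul, rep_mul, mem_SU.1 hξ, rep_inner, ← u_neg, mem_SU.1 hζ])
  refine h1.trans ?_
  congr 1
  refine pj_congr (fun x => ?_) ξ
  rw [mem_SV]
  constructor
  · rintro h _ ⟨y, rfl⟩
    exact h _
  · intro h y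
    have := h _ ⟨Multiplicative.ofAdd ((t : k)⁻¹ * y), rfl⟩
    have h2 : π (v ((t : k) * ((t : k)⁻¹ * y))) x = x := this
    rwa [mul_inv_cancel_left₀ t.ne_zero] at h2

/-- A diagonal matrix preserves inner products between upper- and lower-unipotent invariants:
`π (d t) ξ - ξ` projects to zero on the lower-unipotent invariants. -/
lemma inner_d {ξ η : H} (hξ : ξ ∈ Inv (SU π)) (hη : η ∈ Inv (SV π)) (t : kˣ) :
    inner ℂ (π (d t) ξ) η = inner ℂ ξ η := by
  have hd := d_mem_SU hξ t
  have h1 : pj (SV π) (π (d t) ξ - ξ) = 0 := by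
    apply pj_eq_zero
    rw [pj_sub, inner_sub_left, inner_pj_d hξ (Submodule.sub_mem _ hd hξ), sub_self]
  rw [← sub_eq_zero, ← inner_sub_left, ← pj_inner _ hη, h1, inner_zero_left]

/-- The projection of a lower-unipotent invariant vector to the upper-unipotent invariants is fixed
by the diagonal matrices as well. -/
lemma pj_SU_mem_SB {η : H} (hη : η ∈ Inv (SV π)) : pj (SU π) η ∈ Inv (SB π) := by
  rw [mem_SB]
  refine ⟨pj_mem _ _, fun t => ?_⟩
  have hm := pj_mem (SU π) η
  have hd := d_mem_SU hm t
  have key : ∀ ξ ∈ Inv (SU π), inner ℂ ξ (π (d t) (pj (SU π) η)) = inner ℂ ξ (pj (SU π) η) := by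
    intro ξ hξ
    have h := inner_d hξ hη t⁻¹
    rw [← inner_pj η hξ, ← inner_pj η (d_mem_SU hξ _), d_inv, rep_inner, inv_inv] at h
    exact h
  exact eq_of_inner_sub (key _ (Submodule.sub_mem _ hd hm))

/-- The projection of an upper-triangular invariant vector to the lower-unipotent invariants is
invariant under the whole group. -/
lemma pj_SV_invariant {ξ : H} (hξ : ξ ∈ Inv (SB π)) (g : Matrix.SpecialLinearGroup (Fin 2) k) :
    π g (pj (SV π) ξ) = pj (SV π) ξ := by
  obtain ⟨hU, hT⟩ := mem_SB.1 hξ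
  set β := pj (SV π) ξ with hβ
  have hβV : β ∈ Inv (SV π) := pj_mem _ _
  have hw2 : ∀ ζ ∈ Inv (SB π), π w (π w ζ) = ζ := by
    intro ζ hζ
    rw [← rep_mul, w_w]
    exact (mem_SB.1 hζ).2 _
  have hwinv : ∀ ζ ∈ Inv (SB π), π w⁻¹ ζ = π w ζ := by
    intro ζ hζ
    conv_lhs => rw [← hw2 ζ hζ]
    rw [rep_inv]
  -- by `v_eq`, the coefficient of `v c` between `SB`-invariants is that of `w` for all `c ≠ 0`
  have hmean : ∀ ζ ∈ Inv (SB π), inner ℂ β ζ = inner ℂ (π w ξ) ζ := by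
    intro ζ hζ
    refine mean_eq (π.comp vHom) {1} ξ ζ _ fun c hc => ?_
    have hc' : c.toAdd ≠ 0 := fun h => hc (Finset.mem_singleton.2 h)
    show inner ℂ (π (v c.toAdd) ξ) ζ = _
    have h := v_eq (Units.mk0 c.toAdd hc')
    rw [Units.val_mk0] at h
    rw [h, rep_mul, rep_mul, rep_mul, mem_SU.1 hU, hT, rep_inner, ← u_neg,
      mem_SU.1 (mem_SB.1 hζ).1]
  have hβT : ∀ t, π (d t) β = β := by
    intro t
    rw [hβ, map_pj (A' := SV π) (π (d t)) (fun x => d_mem_SV_iff t), hT]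
  have hwβ : π w⁻¹ β ∈ Inv (SB π) := by
    refine mem_SB.2 ⟨winv_mem_SU hβV, fun t => ?_⟩
    have h : d t * w⁻¹ = w⁻¹ * d t⁻¹ := by
      rw [eq_inv_mul_iff_mul_eq, ← mul_assoc, w_d, mul_inv_cancel_right]
    rw [← rep_mul, h, rep_mul, hβT]
  have h4 : inner ℂ β (π w⁻¹ β) = inner ℂ β β := by
    rw [hmean _ hwβ, rep_inner, hwinv _ hwβ, rep_inv', ← pj_inner ξ hβV]
  have hPβ : pj (SU π) β ∈ Inv (SB π) := pj_SU_mem_SB hβV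
  -- `pj (SU π) β` has the same norm as `β`, so it is `β`
  have h5 : inner ℂ β (pj (SU π) β) = inner ℂ β β := by
    have hwP : π w (pj (SU π) β) ∈ Inv (SV π) := w_mem_SV (pj_mem _ _)
    calc inner ℂ β (pj (SU π) β) = inner ℂ ξ (π w (pj (SU π) β)) := by
          rw [hmean _ hPβ, rep_inner, hwinv _ hPβ]
      _ = inner ℂ β (π w (pj (SU π) β)) := (pj_inner ξ hwP).symm
      _ = inner ℂ (π w⁻¹ β) (pj (SU π) β) := by rw [rep_inner, inv_inv]
      _ = inner ℂ (π w⁻¹ β) β := inner_pj β (mem_SB.1 hwβ).1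
      _ = inner ℂ β β := by rw [← inner_conj_symm, h4, inner_conj_symm]
  have h6 : inner ℂ (pj (SU π) β) β = inner ℂ β β := by
    rw [← inner_conj_symm, h5, inner_conj_symm]
  have hP : pj (SU π) β = β := by
    apply eq_of_inner_sub
    rw [inner_sub_left, inner_sub_left, inner_pj β (pj_mem _ _), h5, h6]
  have hβU : β ∈ Inv (SU π) := hP ▸ pj_mem (SU π) β
  let S : Subgroup (Matrix.SpecialLinearGroup (Fin 2) k) :=
    { carrier := {g | π g β = β}
      mul_mem' := fun {a b} ha hb => by
        show π (a * b) β = β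
        rw [rep_mul, show π b β = β from hb, show π a β = β from ha]
      one_mem' := rep_one π β
      inv_mem' := fun {a} ha => by
        show π a⁻¹ β = β
        conv_lhs => rw [← show π a β = β from ha]
        exact rep_inv π a β }
  exact closure_uv S (mem_SU.1 hβU) (mem_SV.1 hβV) g

end Infinite
end Rep

/-! ### Representations of `SL₂(k) × SL₂(k)` with a diagonally fixed vector -/

section BiRep

variable {k : Type*} [Field k]
variable {H : Type*} [NormedAddCommGroup H] [InnerProductSpace ℂ H]
variable (ρ : Matrix.SpecialLinearGroup (Fin 2) k × Matrix.SpecialLinearGroup (Fin 2) k →*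
  (H ≃ₗᵢ[ℂ] H))

/-- The action of the left factor of `SL₂(k) × SL₂(k)`. -/
def lft : Matrix.SpecialLinearGroup (Fin 2) k →* (H ≃ₗᵢ[ℂ] H) := ρ.comp (MonoidHom.inl _ _)

variable {ρ}

lemma lft_apply (g : Matrix.SpecialLinearGroup (Fin 2) k) (x : H) : lft ρ g x = ρ (g, 1) x := rfl

lemma lft_right (g h : Matrix.SpecialLinearGroup (Fin 2) k) (x : H) :
    lft ρ g (ρ (1, h) x) = ρ (g, h) x := by
  rw [lft_apply, ← rep_mul, Prod.mk_mul_mk, one_mul, mul_one]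

lemma right_lft (g h : Matrix.SpecialLinearGroup (Fin 2) k) (x : H) :
    ρ (1, h) (lft ρ g x) = ρ (g, h) x := by
  rw [lft_apply, ← rep_mul, Prod.mk_mul_mk, one_mul, mul_one]

/-- The right factor preserves the invariants of any subset of the left factor, as the two commute. -/
lemma right_mem_Inv (σ : Set (Matrix.SpecialLinearGroup (Fin 2) k))
    {A : Set (H ≃ₗᵢ[ℂ] H)} (hA : A = lft ρ '' σ) (h : Matrix.SpecialLinearGroup (Fin 2) k) (x : H) :
    ρ (1, h) x ∈ Inv A ↔ x ∈ Inv A := by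
  subst hA
  constructor
  · rintro hx _ ⟨g, hg, rfl⟩
    have := hx _ ⟨g, hg, rfl⟩
    rw [lft_right, ← right_lft] at this
    exact (ρ (1, h)).injective this
  · rintro hx _ ⟨g, hg, rfl⟩
    rw [lft_right, ← right_lft, hx _ ⟨g, hg, rfl⟩]

lemma SU_eq (π : Matrix.SpecialLinearGroup (Fin 2) k →* (H ≃ₗᵢ[ℂ] H)) :
    SU π = π '' Set.range uHom := by
  rw [← Set.range_comp]
  rfl

lemma SV_eq (π : Matrix.SpecialLinearGroup (Fin 2) k →* (H ≃ₗᵢ[ℂ] H)) :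
    SV π = π '' Set.range vHom := by
  rw [← Set.range_comp]
  rfl

lemma SB_eq (π : Matrix.SpecialLinearGroup (Fin 2) k →* (H ≃ₗᵢ[ℂ] H)) :
    SB π = π '' (Set.range uHom ∪ Set.range d) := by
  rw [Set.image_union, ← SU_eq, ← Set.range_comp]
  rfl

/-- The one-parameter subgroup `z ↦ (v (l * z), u z)` of `SL₂(k) × SL₂(k)`. -/
def ell (l : k) : Multiplicative k →*
    Matrix.SpecialLinearGroup (Fin 2) k × Matrix.SpecialLinearGroup (Fin 2) k :=
  (vHomMul l).prod uHom

variable (ρ) in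
/-- The operators by which the one-parameter subgroup `ell l` acts. -/
def SE (l : k) : Set (H ≃ₗᵢ[ℂ] H) := Set.range (ρ.comp (ell l))

lemma mem_SE {l : k} {x : H} : x ∈ Inv (SE ρ l) ↔ ∀ z, ρ (v (l * z), u z) x = x := by
  constructor
  · intro h y
    exact h _ ⟨Multiplicative.ofAdd y, rfl⟩
  · rintro h _ ⟨y, rfl⟩
    exact h _

lemma u_comm (x y : k) : u x * u y = u y * u x := by
  rw [← u_add, ← u_add, add_comm]

lemma v_comm (x y : k) : v x * v y = v y * v x := by
  rw [← v_add, ← v_add, add_comm]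

/-- The subgroups `ell l` and `ell m` commute. -/
lemma SE_comm {l m : k} (z : k) (x : H) :
    ρ (v (l * z), u z) x ∈ Inv (SE ρ m) ↔ x ∈ Inv (SE ρ m) := by
  have hc : ∀ y, ρ (v (m * y), u y) (ρ (v (l * z), u z) x) =
      ρ (v (l * z), u z) (ρ (v (m * y), u y) x) := by
    intro y
    rw [← rep_mul, ← rep_mul, Prod.mk_mul_mk, Prod.mk_mul_mk, v_comm, u_comm]
  rw [mem_SE, mem_SE]
  refine forall_congr' fun y => ?_
  rw [hc]
  exact (ρ (v (l * z), u z)).injective.eq_iff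

/-- For `l ≠ m`, the subgroups `ell l` and `ell m` generate the product of the lower unipotents of
the left factor and the upper unipotents of the right factor. -/
lemma left_right_of_SE {l m : k} (hlm : l ≠ m) {x : H} (hl : x ∈ Inv (SE ρ l))
    (hm : x ∈ Inv (SE ρ m)) : x ∈ Inv (SV (lft ρ)) ∧ ∀ y, ρ (1, u y) x = x := by
  rw [mem_SE] at hl hm
  have hv : ∀ y, lft ρ (v y) x = x := by
    intro y
    have h1 := hl (y / (l - m))
    rw [← hm (-(y / (l - m))), ← rep_mul, Prod.mk_mul_mk, ← u_add, add_neg_cancel, u_zero,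
      ← v_add, hm] at h1
    have h2 : l * (y / (l - m)) + m * -(y / (l - m)) = y := by
      have := sub_ne_zero.2 hlm
      field_simp
      ring
    rwa [h2] at h1
  refine ⟨mem_SV.2 hv, fun y => ?_⟩
  rw [← hv (l * y), right_lft, hl, hv]

/-- The diagonal matrices, embedded diagonally, conjugate `ell m` to `ell (t ^ 4 * m)`. -/
lemma d_mem_SE (t : kˣ) (m : k) (x : H) :
    ρ (d t, d t) x ∈ Inv (SE ρ m) ↔ x ∈ Inv (SE ρ ((t : k) ^ 4 * m)) := by
  rw [mem_SE, mem_SE]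
  have ht : (t : k) ≠ 0 := t.ne_zero
  have key : ∀ z, ρ (v (m * ((t : k) ^ 2 * z)), u ((t : k) ^ 2 * z)) (ρ (d t, d t) x) =
      ρ (d t, d t) (ρ (v ((t : k) ^ 4 * m * z), u z) x) := by
    intro z
    rw [← rep_mul, ← rep_mul, Prod.mk_mul_mk, Prod.mk_mul_mk, v_d, d_u]
    congr 5
    ring
  constructor
  · intro h z
    have := h ((t : k) ^ 2 * z)
    rw [key] at this
    exact (ρ (d t, d t)).injective this
  · intro h z
    have := key (((t : k) ^ 2)⁻¹ * z)
    rwa [mul_inv_cancel_left₀ (pow_ne_zero 2 ht), h] at this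

/-- Fourth-power classes are infinite, since `t ↦ t ^ 4` has finite fibres. -/
lemma infinite_range_pow [Infinite k] {l : k} (hl : l ≠ 0) :
    Infinite ((fun t : k => t ^ 4 * l) '' {0}ᶜ) := by
  classical
  rw [Set.infinite_coe_iff]
  intro hfin
  refine (Set.finite_singleton (0 : k)).infinite_compl (Set.Finite.of_finite_fibers _ hfin ?_)
  intro a _
  refine ((Polynomial.nthRoots 4 (a / l)).toFinset.finite_toSet).subset ?_
  rintro t ⟨_, ht⟩
  have ht' : t ^ 4 * l = a := ht
  simp only [Finset.mem_coe, Multiset.mem_toFinset]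
  rw [Polynomial.mem_nthRoots (by norm_num), eq_div_iff hl, ht']

variable [CompleteSpace H]

lemma pj_apply {A : Set (H ≃ₗᵢ[ℂ] H)} {a : H ≃ₗᵢ[ℂ] H} (ha : a ∈ A) (x : H) :
    pj A (a x) = pj A x := by
  refine pj_unique (pj_mem _ _) fun z hz => ?_
  rw [pj_inner x hz]
  conv_lhs => rw [← hz a ha]
  exact a.inner_map_map _ _

variable [Infinite k] {ξ : H}

/-- The upper-unipotent mean of a diagonally fixed vector is fixed by the diagonal matrices of the
left factor. Let `p - q` be its component orthogonal to the upper-triangular invariants. The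
translates of `p - q` by the diagonally embedded lower unipotents are pairwise orthogonal, because
`v_eq` turns their inner products into ones between a vector orthogonal to the lower-unipotent
invariants and a lower-unipotent invariant vector; yet they all have the same inner product with
`ξ`. -/
lemma pj_fixed_mem_SB (hfix : ∀ g, ρ (g, g) ξ = ξ) :
    pj (SU (lft ρ)) ξ ∈ Inv (SB (lft ρ)) := by
  set p := pj (SU (lft ρ)) ξ with hp
  set q := pj (SB (lft ρ)) p with hq
  have hpU : p ∈ Inv (SU (lft ρ)) := pj_mem _ _
  have hqB : q ∈ Inv (SB (lft ρ)) := pj_mem _ _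
  have hkU : p - q ∈ Inv (SU (lft ρ)) := Submodule.sub_mem _ hpU (mem_SB.1 hqB).1
  have hkB : ∀ z ∈ Inv (SB (lft ρ)), inner ℂ (p - q) z = 0 := by
    intro z hz
    rw [inner_sub_left, hq, pj_inner p hz, sub_self]
  have hk : inner ℂ (p - q) ξ = inner ℂ (p - q) (p - q) := by
    rw [← inner_pj ξ hkU, ← hp, inner_sub_right (p - q), hkB q hqB, sub_zero]
  have haU : ∀ h, ρ (1, h) (p - q) ∈ Inv (SU (lft ρ)) := fun h =>
    (right_mem_Inv _ (SU_eq _) h _).2 hkU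
  have haV : ∀ h, ∀ η ∈ Inv (SV (lft ρ)), inner ℂ (ρ (1, h) (p - q)) η = 0 := by
    intro h η hη
    rw [← inner_pj η (haU h), rep_inner]
    rw [Prod.inv_mk, inv_one]
    exact hkB _ ((right_mem_Inv _ (SB_eq _) h⁻¹ _).2 (pj_SU_mem_SB hη))
  have h0 : inner ℂ (p - q) ξ = 0 := by
    refine bessel_zero (fun x : k => ρ (v x, v x) (p - q)) ξ ‖p - q‖ _ (fun x => ?_)
      (fun x y hxy => ?_) fun x => ?_
    · exact ((ρ (v x, v x)).norm_map _).le
    · have h := v_eq (Units.mk0 (-x + y) (by rwa [neg_add_eq_sub, sub_ne_zero, ne_comm]))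
      rw [Units.val_mk0, v_add, v_neg] at h
      rw [← lft_right (v x), ← lft_right (v y), rep_inner, ← rep_mul (lft ρ), h, rep_mul, rep_mul, rep_mul,
        mem_SU.1 (haU _), ← inv_inv (u _), ← rep_inner, ← u_neg, mem_SU.1 (haU _)]
      exact haV _ _ (w_mem_SV (d_mem_SU (haU _) _))
    · rw [rep_inner]
      exact congrArg _ (hfix (v x)⁻¹)
  rw [hk, inner_self_eq_zero, sub_eq_zero] at h0
  rw [h0]
  exact hqB

/-- A vector invariant under the left lower unipotents and the right upper unipotents is orthogonal
to `ξ`. Its inner product with `ξ` equals that with `γ₀`, the lower-unipotent projection of the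
upper-unipotent mean of `ξ`; this `γ₀` is invariant under the left factor, so `hZ` forces
`‖γ₀‖ ^ 2 = 0`. -/
lemma inner_left_right_eq_zero (hfix : ∀ g, ρ (g, g) ξ = ξ)
    (hZ : ∀ η, (∀ g, lft ρ g η = η) → inner ℂ η ξ = 0) {γ : H}
    (hγV : γ ∈ Inv (SV (lft ρ))) (hγU : ∀ y, ρ (1, u y) γ = γ) : inner ℂ ξ γ = 0 := by
  have hswap : ∀ g, ρ (1, g) ξ = lft ρ g⁻¹ ξ := by
    intro g
    conv_rhs => rw [← hfix g, lft_apply, ← rep_mul, Prod.mk_mul_mk, inv_mul_cancel, one_mul]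
  set γ₀ := pj (SV (lft ρ)) (pj (SU (lft ρ)) ξ) with hγ₀
  have h1 : ∀ γ ∈ Inv (SV (lft ρ)), (∀ y, ρ (1, u y) γ = γ) → inner ℂ ξ γ = inner ℂ γ₀ γ := by
    intro γ hV hU
    rw [hγ₀, pj_inner _ hV]
    refine (mean_eq ((lft ρ).comp uHom) ∅ ξ γ _ fun c _ => ?_).symm
    show inner ℂ (lft ρ (u c.toAdd) ξ) γ = _
    rw [← inv_inv (u c.toAdd), ← hswap, rep_inner]
    show inner ℂ ξ (ρ ((1 : Matrix.SpecialLinearGroup (Fin 2) k)⁻¹, (u c.toAdd)⁻¹⁻¹) γ) = _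
    rw [inv_inv, inv_one, hU]
  have hR : ∀ y, ρ (1, u y) γ₀ = γ₀ := by
    intro y
    rw [hγ₀, map_pj (A' := SV (lft ρ)) (ρ (1, u y)) (right_mem_Inv _ (SV_eq _) (u y)),
      map_pj (A' := SU (lft ρ)) (ρ (1, u y)) (right_mem_Inv _ (SU_eq _) (u y)), hswap, ← u_neg,
      pj_apply (A := SU (lft ρ)) (a := lft ρ (u (-y))) ⟨Multiplicative.ofAdd (-y), rfl⟩]
  have h2 : inner ℂ γ₀ ξ = 0 := hZ _ (pj_SV_invariant (pj_fixed_mem_SB hfix))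
  have h3 := h1 γ₀ (pj_mem _ _) hR
  rw [← inner_conj_symm, h2, map_zero, eq_comm, inner_self_eq_zero] at h3
  rw [h1 γ hγV hγU, h3, inner_zero_left]

/-- Vectors invariant under `ell l` are orthogonal to `ξ`. The projections of `ξ` to the invariants
of the subgroups `ell m`, for `m` in the fourth-power class of `l`, are pairwise orthogonal and have
the same inner product with `ξ`. -/
lemma inner_SE_eq_zero (hfix : ∀ g, ρ (g, g) ξ = ξ)
    (hZ : ∀ η, (∀ g, lft ρ g η = η) → inner ℂ η ξ = 0) {l : k} (hl : l ≠ 0) {η : H}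
    (hη : η ∈ Inv (SE ρ l)) : inner ℂ ξ η = 0 := by
  have horth : ∀ l m : k, l ≠ m → inner ℂ (pj (SE ρ l) ξ) (pj (SE ρ m) ξ) = 0 := by
    intro l m hlm
    rw [← inner_pj (pj (SE ρ m) ξ) (pj_mem (SE ρ l) ξ), pj_inner ξ (pj_mem _ _)]
    have hm : pj (SE ρ l) (pj (SE ρ m) ξ) ∈ Inv (SE ρ m) := by
      rw [mem_SE]
      intro z
      rw [map_pj (A' := SE ρ l) _ (SE_comm z), mem_SE.1 (pj_mem (SE ρ m) ξ)]
    obtain ⟨hV, hU⟩ := left_right_of_SE hlm (pj_mem _ _) hm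
    exact inner_left_right_eq_zero hfix hZ hV hU
  have hconst : ∀ t : kˣ, inner ℂ (pj (SE ρ ((t : k) ^ 4 * l)) ξ) ξ = inner ℂ (pj (SE ρ l) ξ) ξ := by
    intro t
    have h := map_pj (A' := SE ρ l) (ρ (d t, d t)) (d_mem_SE t l) ξ
    rw [hfix] at h
    rw [← h, rep_inner]
    exact congrArg _ (hfix (d t)⁻¹).symm
  have := infinite_range_pow hl
  have h0 : inner ℂ (pj (SE ρ l) ξ) ξ = 0 := by
    refine bessel_zero (fun i : ((fun t : k => t ^ 4 * l) '' {0}ᶜ) => pj (SE ρ i.1) ξ) ξ ‖ξ‖ _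
      (fun i => ?_) (fun i j hij => horth _ _ fun h => hij (Subtype.ext h)) ?_
    · exact Submodule.norm_starProjection_apply_le _ _
    · rintro ⟨_, t, ht, rfl⟩
      exact hconst (Units.mk0 t ht)
  rw [← pj_inner ξ hη, pj_eq_zero h0, inner_zero_left]

/-- Translating `ξ` by the inverse of `u x * w * d c` gives a vector invariant under
`ell (-c ^ 2)`, so the matrix coefficient vanishes on such elements. -/
lemma inner_bigCell_eq_zero (hfix : ∀ g, ρ (g, g) ξ = ξ)
    (hZ : ∀ η, (∀ g, lft ρ g η = η) → inner ℂ η ξ = 0) (x : k) (c : kˣ) :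
    inner ℂ ξ (lft ρ (u x * (w * d c)) ξ) = 0 := by
  set g := u x * (w * d c) with hg
  have hconj : ∀ z, v (-(c : k) ^ 2 * z) * g⁻¹ = g⁻¹ * u z := by
    intro z
    rw [eq_inv_mul_iff_mul_eq, ← mul_assoc, mul_inv_eq_iff_eq_mul, hg, ← mul_assoc (u z), u_comm,
      mul_assoc, mul_assoc, mul_assoc]
    congr 1
    have h1 := w_v (-z)
    rw [neg_neg] at h1
    rw [← mul_assoc (u z), ← h1, mul_assoc, v_d]
    congr 3
    ring
  have h : inner ℂ ξ (lft ρ g⁻¹ ξ) = 0 := by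
    refine inner_SE_eq_zero hfix hZ (l := -(c : k) ^ 2) (neg_ne_zero.2 (pow_ne_zero 2 c.ne_zero)) ?_
    rw [mem_SE]
    intro z
    rw [lft_apply, ← rep_mul, Prod.mk_mul_mk, hconj, mul_one]
    conv_rhs => rw [← hfix (u z), ← rep_mul, Prod.mk_mul_mk, one_mul]
  rw [← inner_conj_symm, rep_inner, h, map_zero]

end BiRep

/-! ### Extremal characters -/

section Characters

variable {Γ : Type*} [Group Γ] {τ : Γ → ℂ}

lemma sum_mul_conj {n : ℕ} (lam : Fin n → ℂ) :
    ∑ i, ∑ j, lam i * (starRingEnd ℂ) (lam j) = ((‖∑ i, lam i‖ ^ 2 : ℝ) : ℂ) := by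
  rw [← Finset.sum_mul_sum, ← map_sum, Complex.mul_conj, Complex.normSq_eq_norm_sq]

lemma isCharacter_one : IsCharacter fun _ : Γ => (1 : ℂ) := by
  refine ⟨fun n lam g => ?_, fun _ _ => rfl, rfl⟩
  simp only [mul_one]
  rw [sum_mul_conj]
  exact Complex.zero_le_real.2 (sq_nonneg _)

/-- A character of `Γ` gives a positive definite function on `Γ × Γ`, to which the GNS construction
applies. -/
lemma posDef_prod (hτ : IsCharacter τ) : PosDef fun p : Γ × Γ => τ (p.1 * p.2⁻¹) := by
  intro n lam g
  have h := hτ.1 n lam fun i => (g i).1 * (g i).2⁻¹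
  have hg : ∀ i j, τ (((g j)⁻¹ * g i).1 * ((g j)⁻¹ * g i).2⁻¹) =
      τ (((g j).1 * (g j).2⁻¹)⁻¹ * ((g i).1 * (g i).2⁻¹)) := by
    intro i j
    rw [← hτ.2.1 _ (g j).2]
    simp [mul_assoc]
  simp only [hg]
  exact h

/-- An extremal character that dominates a positive multiple of the trivial character is trivial. -/
lemma eq_one_of_domination (hτ : IsExtremalCharacter τ) {s : ℝ} (hs0 : 0 < s) (hs1 : s < 1)
    (h : ∀ (n : ℕ) (lam : Fin n → ℂ) (g : Fin n → Γ), ((s * ‖∑ i, lam i‖ ^ 2 : ℝ) : ℂ) ≤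
      ∑ i, ∑ j, lam i * (starRingEnd ℂ) (lam j) * τ ((g j)⁻¹ * g i)) : τ = fun _ => 1 := by
  obtain ⟨hc, hext⟩ := hτ
  have hs1' : 0 < 1 - s := sub_pos.2 hs1
  have hne : (1 - s : ℂ) ≠ 0 := by exact_mod_cast hs1'.ne'
  have hχ : IsCharacter fun g => ((1 - s)⁻¹ : ℝ) * (τ g - s) := by
    refine ⟨fun n lam g => ?_, fun g h => ?_, ?_⟩
    · have h1 : ∑ i, ∑ j, lam i * (starRingEnd ℂ) (lam j) *
          (((1 - s)⁻¹ : ℝ) * (τ ((g j)⁻¹ * g i) - s)) = ((1 - s)⁻¹ : ℝ) *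
          (∑ i, ∑ j, lam i * (starRingEnd ℂ) (lam j) * τ ((g j)⁻¹ * g i) -
            ((s * ‖∑ i, lam i‖ ^ 2 : ℝ) : ℂ)) := by
        rw [Complex.ofReal_mul s, ← sum_mul_conj, Finset.mul_sum, ← Finset.sum_sub_distrib,
          Finset.mul_sum]
        refine Finset.sum_congr rfl fun i _ => ?_
        rw [Finset.mul_sum, ← Finset.sum_sub_distrib, Finset.mul_sum]
        refine Finset.sum_congr rfl fun j _ => ?_
        ring
      rw [h1]
      refine mul_nonneg ?_ (sub_nonneg.2 (h n lam g))
      exact Complex.zero_le_real.2 (inv_pos.2 hs1').le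
    · show _ * (τ _ - s) = _
      rw [hc.2.1]
    · show _ * (τ 1 - s) = 1
      rw [hc.2.2]
      push_cast
      exact inv_mul_cancel₀ hne
  have hpt : ∀ g, s • (1 : ℂ) + (1 - s) • (((1 - s)⁻¹ : ℝ) * (τ g - s)) = τ g := by
    intro g
    rw [Complex.real_smul, Complex.real_smul]
    push_cast
    rw [mul_inv_cancel_left₀ hne]
    ring
  have hseg : τ ∈ openSegment ℝ (fun _ : Γ => (1 : ℂ))
      (fun g => ((1 - s)⁻¹ : ℝ) * (τ g - s)) :=
    ⟨s, 1 - s, hs0, hs1', add_sub_cancel s 1, funext hpt⟩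
  have h1 : (fun _ : Γ => (1 : ℂ)) ∈ {φ : Γ → ℂ | IsCharacter φ} := isCharacter_one
  have h2 : (fun g => ((1 - s)⁻¹ : ℝ) * (τ g - s)) ∈ {φ : Γ → ℂ | IsCharacter φ} := hχ
  exact (hext h1 h2 hseg).symm

/-- In a representation realizing a nontrivial extremal character, the invariant vectors are
orthogonal to `ξ`. Otherwise Cauchy-Schwarz shows that the character dominates a multiple of the
trivial one; the factor `2` in the multiple makes it less than `1`. -/
lemma inner_invariant_eq_zero (hτ : IsExtremalCharacter τ) (hne : τ ≠ fun _ => 1)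
    {H : Type*} [NormedAddCommGroup H] [InnerProductSpace ℂ H] (π : Γ →* (H ≃ₗᵢ[ℂ] H)) {ξ : H}
    (hπ : ∀ g, inner ℂ ξ (π g ξ) = τ g) {η : H} (hη : ∀ g, π g η = η) : inner ℂ η ξ = 0 := by
  by_contra h0
  refine hne ?_
  have hη0 : η ≠ 0 := by
    rintro rfl
    exact h0 (inner_zero_left _)
  have hηpos : 0 < ‖η‖ := norm_pos_iff.2 hη0
  have hapos : 0 < ‖inner ℂ η ξ‖ := norm_pos_iff.2 h0
  have hξ : ‖ξ‖ = 1 := by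
    have h := hπ 1
    rw [rep_one, inner_self_eq_norm_sq_to_K, hτ.1.2.2] at h
    have h' : ‖ξ‖ ^ 2 = 1 := Complex.ofReal_injective (by simpa using h)
    exact (pow_eq_one_iff_of_nonneg (norm_nonneg _) two_ne_zero).1 h'
  have hle : ‖inner ℂ η ξ‖ ≤ ‖η‖ := by
    have := norm_inner_le_norm (𝕜 := ℂ) η ξ
    rwa [hξ, mul_one] at this
  refine eq_one_of_domination hτ (s := ‖inner ℂ η ξ‖ ^ 2 / (2 * ‖η‖ ^ 2)) (by positivity) ?_ ?_
  · rw [div_lt_one (by positivity)]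
    nlinarith
  · intro n lam g
    set x := ∑ i, lam i • π (g i) ξ with hx
    have h1 : ∑ i, ∑ j, lam i * (starRingEnd ℂ) (lam j) * τ ((g j)⁻¹ * g i) =
        ((‖x‖ ^ 2 : ℝ) : ℂ) := by
      have h2 : (inner ℂ x x : ℂ) = ((‖x‖ ^ 2 : ℝ) : ℂ) := by
        rw [inner_self_eq_norm_sq_to_K]
        norm_cast
      rw [← h2, hx, inner_sum]
      refine Finset.sum_congr rfl fun i _ => ?_
      rw [sum_inner]
      refine Finset.sum_congr rfl fun j _ => ?_
      rw [inner_smul_left, inner_smul_right, rep_inner, ← rep_mul, hπ]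
      ring
    have h3 : inner ℂ η x = (∑ i, lam i) * inner ℂ η ξ := by
      rw [hx, inner_sum, Finset.sum_mul]
      refine Finset.sum_congr rfl fun i _ => ?_
      conv_lhs => rw [inner_smul_right, ← hη (g i), (π (g i)).inner_map_map]
    have h4 : ‖∑ i, lam i‖ * ‖inner ℂ η ξ‖ ≤ ‖η‖ * ‖x‖ := by
      rw [← norm_mul, ← h3]
      exact norm_inner_le_norm _ _
    rw [h1]
    norm_cast
    have h5 : (‖∑ i, lam i‖ * ‖inner ℂ η ξ‖) ^ 2 ≤ (‖η‖ * ‖x‖) ^ 2 := by gcongr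
    rw [div_mul_eq_mul_div, div_le_iff₀ (by positivity)]
    nlinarith [sq_nonneg (‖η‖ * ‖x‖)]

end Characters

end SL2Rigidity

open SL2Rigidity in
theorem character_rigidity_SL2_infinite_field
    (k : Type*) [Field k] [Infinite k]
    (τ : Matrix.SpecialLinearGroup (Fin 2) k → ℂ)
    (hτ : IsExtremalCharacter τ)
    (hne : τ ≠ fun _ => 1) :
    ∀ g : Matrix.SpecialLinearGroup (Fin 2) k,
      g ∉ Subgroup.center (Matrix.SpecialLinearGroup (Fin 2) k) → τ g = 0 := by
  intro g hg
  obtain ⟨H, _, _, _, ρ, ξ, hρ⟩ := exists_gns (posDef_prod hτ.1)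
  have hπ : ∀ g, inner ℂ ξ (lft ρ g ξ) = τ g := by
    intro g
    rw [lft_apply, hρ, inv_one, mul_one]
  have hnorm : inner ℂ ξ ξ = (1 : ℂ) := by
    have := hπ 1
    rwa [rep_one, hτ.1.2.2] at this
  have hfix : ∀ g, ρ (g, g) ξ = ξ := by
    intro g
    have h1 : inner ℂ ξ (ρ (g, g) ξ) = (1 : ℂ) := by
      rw [hρ, mul_inv_cancel, hτ.1.2.2]
    have h2 : inner ℂ (ρ (g, g) ξ) ξ = (1 : ℂ) := by
      rw [← inner_conj_symm, h1, map_one]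
    apply eq_of_inner_sub
    rw [inner_sub_left, inner_sub_left, (ρ (g, g)).inner_map_map, hnorm, h1, h2]
  obtain ⟨h, x, c, hx⟩ := exists_conj g hg
  rw [← hτ.1.2.1 g h, hx, ← hπ]
  exact inner_bigCell_eq_zero hfix (fun η hη => inner_invariant_eq_zero hτ hne (lft ρ) hπ hη) x c
end

section
/- Let Γ and Λ be groups and let τ : Γ × Λ → ℂ be an extremal normalized character. Then τ(g, h) = τ(g, e) · τ(e, h) for all g ∈ Γ and h ∈ Λ. -/
/-!
Write `G = Γ × Λ` and fix `h : Λ`. The translate `x ↦ τ (x * (1, h))` need not be a class function,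
but it can be averaged over the conjugacy class of `(1, h)`: in the Gelfand–Naimark–Segal space of
`τ`, a norm-minimizing sequence in the convex hull of the vectors attached to that class is, by the
parallelogram law, asymptotically invariant under conjugation, so its matrix coefficients converge
along an ultrafilter to a class function `φ` on `G` (`IsCharacter.exists_average`). Conjugation by
the `Λ`-component fixes `(g, 1)`, so the averaging changes nothing there and `φ (g, 1) = τ (g, h)`.

Since right translations act isometrically, `φ` is dominated by `τ` as a sesquilinear form. Hence
`τ ± 2 Re (c φ)` is again positive definite for small `c`, where `2 Re (c φ)` stands for
`c φ x + conj (c φ x⁻¹)`, and extremality of `τ` forces `φ = φ 1 • τ`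
(`IsExtremalCharacter.eq_mul_of_dominated`). Evaluating at `(g, 1)` gives
`τ (g, h) = φ 1 * τ (g, 1)` with `φ 1 = τ (1, h)`.
-/

open scoped ComplexOrder

/-! ### The semi-inner product of a character -/

/-- A positive definite function is Hermitian. -/
lemma IsCharacter.conj_inv {G : Type*} [Group G] {τ : G → ℂ} (hτ : IsCharacter τ) (g : G) :
    (starRingEnd ℂ) (τ g⁻¹) = τ g := by
  have h1 := (Complex.nonneg_iff.1 (hτ.1 2 ![1, 1] ![1, g])).2
  have h2 := (Complex.nonneg_iff.1 (hτ.1 2 ![1, Complex.I] ![1, g])).2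
  simp [Fin.sum_univ_two, hτ.2.2] at h1 h2
  apply Complex.ext <;> simp <;> linarith

/-- The positivity condition in terms of finitely supported functions on `G`, with the conjugate
on the first factor as in Mathlib's inner products. -/
lemma IsCharacter.sum_nonneg {G : Type*} [Group G] {τ : G → ℂ} (hτ : IsCharacter τ)
    (f : G →₀ ℂ) :
    0 ≤ f.sum fun a x => f.sum fun b y => (starRingEnd ℂ) x * y * τ (a⁻¹ * b) := by
  have h := hτ.1 _ (fun i => f (f.support.equivFin.symm i)) (fun i => f.support.equivFin.symm i)
  convert h using 1
  unfold Finsupp.sum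
  rw [← Finset.sum_coe_sort, ← f.support.equivFin.symm.sum_comp, Finset.sum_comm]
  rw [← Finset.sum_coe_sort, ← f.support.equivFin.symm.sum_comp]
  refine Finset.sum_congr rfl fun i _ => Finset.sum_congr rfl fun j _ => ?_
  ring

open scoped InnerProductSpace in
/-- Conjugation-equivariant Gelfand–Naimark–Segal construction, before separation and
completion: the free vector space on `G` with the semi-inner product given by `τ`. -/
lemma IsCharacter.exists_gns.{u} {G : Type u} [Group G] {τ : G → ℂ} (hτ : IsCharacter τ) :
    ∃ (V : Type u) (_ : SeminormedAddCommGroup V) (_ : InnerProductSpace ℂ V)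
      (e : G → V) (U : G → V →ₗ[ℂ] V), (∀ a b, ⟪e a, e b⟫_ℂ = τ (a⁻¹ * b)) ∧
      (∀ k x, U k (e x) = e (k * x * k⁻¹)) ∧ ∀ k v, ‖U k v‖ = ‖v‖ := by
  let c : PreInnerProductSpace.Core ℂ (G →₀ ℂ) :=
    { inner := fun f g => f.sum fun a x => g.sum fun b y => (starRingEnd ℂ) x * y * τ (a⁻¹ * b)
      conj_inner_symm := fun f g => by
        simp only [Finsupp.sum, map_sum]
        rw [Finset.sum_comm]
        refine Finset.sum_congr rfl fun i _ => Finset.sum_congr rfl fun j _ => ?_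
        rw [← hτ.conj_inv (i⁻¹ * j)]
        simp only [map_mul, Complex.conj_conj, mul_inv_rev, inv_inv]
        ring
      re_inner_nonneg := fun f => (Complex.nonneg_iff.1 (hτ.sum_nonneg f)).1
      add_left := fun f g k => by
        apply Finsupp.sum_add_index'
        · simp
        · intro a x y
          simp [add_mul, Finsupp.sum_add]
      smul_left := fun f g r => by
        rw [Finsupp.sum_smul_index' (by simp), Finsupp.mul_sum]
        simp [Finsupp.mul_sum, mul_assoc] }
  let i1 : SeminormedAddCommGroup (G →₀ ℂ) :=
    @InnerProductSpace.Core.toSeminormedAddCommGroup ℂ (G →₀ ℂ) _ _ _ c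
  let i2 : InnerProductSpace ℂ (G →₀ ℂ) := InnerProductSpace.ofCore c
  have hin : ∀ f g : G →₀ ℂ, ⟪f, g⟫_ℂ =
    f.sum fun a x => g.sum fun b y => (starRingEnd ℂ) x * y * τ (a⁻¹ * b) := fun _ _ => rfl
  refine ⟨G →₀ ℂ, i1, i2, fun g => Finsupp.single g 1,
    fun k => Finsupp.lmapDomain ℂ ℂ fun x => k * x * k⁻¹, fun a b => ?_, fun k x => ?_,
    fun k v => ?_⟩
  · rw [hin]
    simp
  · simp
  · have : ⟪Finsupp.lmapDomain ℂ ℂ (fun x => k * x * k⁻¹) v,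
        Finsupp.lmapDomain ℂ ℂ (fun x => k * x * k⁻¹) v⟫_ℂ = ⟪v, v⟫_ℂ := by
      rw [hin, hin, Finsupp.lmapDomain_apply, Finsupp.sum_mapDomain_index (by simp)
        (by simp [add_mul, Finsupp.sum_add])]
      refine Finsupp.sum_congr fun a _ => ?_
      rw [Finsupp.sum_mapDomain_index (by simp) (by intros; ring)]
      refine Finsupp.sum_congr fun b _ => ?_
      rw [← hτ.2.1 (a⁻¹ * b) k]
      congr 2
      group
    rw [@norm_eq_sqrt_re_inner ℂ, this, ← @norm_eq_sqrt_re_inner ℂ]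

/-! ### Class functions dominated by an extremal character -/

/-- A class function dominated by an extremal character is a multiple of it. -/
lemma IsExtremalCharacter.eq_mul_of_dominated {G : Type*} [Group G] {τ φ : G → ℂ}
    (hτ : IsExtremalCharacter τ) (hφ : ∀ g h : G, φ (h * g * h⁻¹) = φ g)
    (hdom : ∀ (n : ℕ) (lam : Fin n → ℂ) (g : Fin n → G),
      ‖∑ i, ∑ j, lam i * (starRingEnd ℂ) (lam j) * φ ((g j)⁻¹ * g i)‖ ≤
        (∑ i, ∑ j, lam i * (starRingEnd ℂ) (lam j) * τ ((g j)⁻¹ * g i)).re) (x : G) :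
    φ x = φ 1 * τ x := by
  have hchar : IsCharacter τ := hτ.1
  have hext : ∀ f g, IsCharacter f → IsCharacter g → τ ∈ openSegment ℝ f g → f = τ :=
    fun f g hf hg h => hτ.2 hf hg h
  have hφ1 : ‖φ 1‖ ≤ 1 := by
    simpa [hchar.2.2] using hdom 1 (fun _ => 1) (fun _ => 1)
  -- `ψ c` perturbs `τ` by twice the Hermitian part of `c φ`, and `α c = ψ c 1` normalizes it.
  let α : ℂ → ℝ := fun c => 1 + 2 * (c * φ 1).re
  let ψ : ℂ → G → ℂ := fun c x => τ x + (c * φ x + (starRingEnd ℂ) (c * φ x⁻¹))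
  have hα : ∀ c : ℂ, ‖c‖ ≤ 1 / 4 → 0 < α c := by
    intro c hc
    have h1 : ‖c * φ 1‖ ≤ 1 / 4 := by
      rw [norm_mul]; nlinarith [norm_nonneg c, norm_nonneg (φ 1)]
    have h2 := (abs_le.1 (Complex.abs_re_le_norm (c * φ 1))).1
    simp only [α]
    linarith
  have hψ : ∀ c : ℂ, ‖c‖ ≤ 1 / 4 → IsCharacter (fun x => ((α c)⁻¹ : ℝ) • ψ c x) := by
    intro c hc
    refine ⟨fun n lam g => ?_, fun g h => ?_, ?_⟩
    · set S := ∑ i, ∑ j, lam i * (starRingEnd ℂ) (lam j) * φ ((g j)⁻¹ * g i) with hS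
      set T := ∑ i, ∑ j, lam i * (starRingEnd ℂ) (lam j) * τ ((g j)⁻¹ * g i) with hT
      have hT0 : 0 ≤ T := hchar.1 n lam g
      have hST : ‖S‖ ≤ T.re := hdom n lam g
      have hS' : (starRingEnd ℂ) S =
          ∑ i, ∑ j, lam i * (starRingEnd ℂ) (lam j) *
            (starRingEnd ℂ) (φ ((g j)⁻¹ * g i)⁻¹) := by
        rw [hS, Finset.sum_comm]
        simp only [map_sum]
        refine Finset.sum_congr rfl fun i _ => Finset.sum_congr rfl fun j _ => ?_
        simp only [map_mul, Complex.conj_conj, mul_inv_rev, inv_inv]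
        ring
      have key : ∑ i, ∑ j, lam i * (starRingEnd ℂ) (lam j) *
          (((α c)⁻¹ : ℝ) • ψ c ((g j)⁻¹ * g i)) =
          (((α c)⁻¹ : ℝ) : ℂ) * (T + (c * S + (starRingEnd ℂ) (c * S))) := by
        rw [map_mul, hS', hS, hT]
        simp only [Finset.mul_sum, ← Finset.sum_add_distrib]
        refine Finset.sum_congr rfl fun i _ => Finset.sum_congr rfl fun j _ => ?_
        simp only [ψ, Complex.real_smul, map_mul]
        ring
      rw [key]
      refine mul_nonneg (by exact_mod_cast (inv_pos.2 (hα c hc)).le) ?_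
      rw [Complex.add_conj, Complex.nonneg_iff]
      have h1 : ‖c * S‖ ≤ 1 / 4 * T.re := by
        rw [norm_mul]; gcongr
      have h2 := (abs_le.1 (Complex.abs_re_le_norm (c * S))).1
      have h3 := (Complex.nonneg_iff.1 hT0)
      constructor
      · rw [Complex.add_re, Complex.ofReal_re]
        linarith [h3.1]
      · rw [Complex.add_im, Complex.ofReal_im, ← h3.2, add_zero]
    · have h3 : φ (h * g * h⁻¹)⁻¹ = φ g⁻¹ := by
        rw [← hφ g⁻¹ h]
        congr 1
        group
      simp only [ψ, hchar.2.1, hφ, h3]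
    · have : ψ c 1 = (α c : ℂ) := by
        simp only [ψ, α, hchar.2.2, inv_one, Complex.add_conj]
        push_cast
        ring
      simp only [this, Complex.real_smul]
      rw [← Complex.ofReal_mul, inv_mul_cancel₀ (hα c hc).ne', Complex.ofReal_one]
  have main : ∀ c : ℂ, ‖c‖ ≤ 1 / 4 →
      c * φ x + (starRingEnd ℂ) (c * φ x⁻¹) = (2 * (c * φ 1).re : ℝ) * τ x := by
    intro c hc
    have hc' : ‖-c‖ ≤ 1 / 4 := by rwa [norm_neg]
    have hp := hα c hc
    have hm := hα (-c) hc'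
    have hsum : α c / 2 + α (-c) / 2 = 1 := by
      simp only [α, neg_mul, Complex.neg_re]; ring
    have hseg : τ ∈ openSegment ℝ (fun x => ((α c)⁻¹ : ℝ) • ψ c x)
        (fun x => ((α (-c))⁻¹ : ℝ) • ψ (-c) x) := by
      refine ⟨α c / 2, α (-c) / 2, half_pos hp, half_pos hm, hsum, ?_⟩
      funext y
      simp only [Pi.add_apply, Pi.smul_apply, smul_smul]
      rw [div_mul_eq_mul_div, mul_inv_cancel₀ hp.ne', div_mul_eq_mul_div,
        mul_inv_cancel₀ hm.ne']
      simp only [ψ, Complex.real_smul, neg_mul, map_neg]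
      push_cast
      ring
    have := hext _ _ (hψ c hc) (hψ (-c) hc') hseg
    have hx := congrFun this x
    rw [inv_smul_eq_iff₀ hp.ne'] at hx
    simp only [ψ, α, Complex.real_smul, Complex.ofReal_add, Complex.ofReal_one] at hx
    linear_combination hx
  -- The values `c = 1 / 4` and `c = I / 4` together recover `φ x` from its Hermitian parts.
  have m1 := main (1 / 4) (by norm_num)
  have m2 := main (Complex.I / 4) (by norm_num)
  have e1 : (1 / 4 * φ 1).re = (φ 1).re / 4 := by
    simp [Complex.mul_re, Complex.normSq]; ring
  have e2 : (Complex.I / 4 * φ 1).re = -(φ 1).im / 4 := by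
    simp [Complex.mul_re]; ring
  rw [e1] at m1
  rw [e2] at m2
  have h1 := Complex.re_add_im (φ 1)
  simp only [map_mul, map_div₀, Complex.conj_I, map_one, map_ofNat] at m1 m2
  push_cast at m1 m2
  linear_combination 2 * m1 - 2 * Complex.I * m2 + τ x * h1 +
    ((φ x - (starRingEnd ℂ) (φ x⁻¹)) / 2) * Complex.I_sq

/-! ### Averaging over a conjugacy class -/

open scoped InnerProductSpace in
/-- Averaging over a conjugacy class: some class function dominated by `τ` lies in the pointwise
closed convex hull of the translates `x ↦ τ (x * (y * z * y⁻¹))`; the membership is recorded only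
at the points where all these translates agree. -/
lemma IsCharacter.exists_average {G : Type*} [Group G] {τ : G → ℂ} (hτ : IsCharacter τ) (z : G) :
    ∃ φ : G → ℂ, (∀ g h : G, φ (h * g * h⁻¹) = φ g) ∧
      (∀ (n : ℕ) (lam : Fin n → ℂ) (g : Fin n → G),
        ‖∑ i, ∑ j, lam i * (starRingEnd ℂ) (lam j) * φ ((g j)⁻¹ * g i)‖ ≤
          (∑ i, ∑ j, lam i * (starRingEnd ℂ) (lam j) * τ ((g j)⁻¹ * g i)).re) ∧
      ∀ x c, (∀ y, τ (x * (y * z * y⁻¹)) = c) → φ x = c := by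
  obtain ⟨V, _, _, e, U, he, hU, hUn⟩ := hτ.exists_gns
  let C : Set V := convexHull ℝ (Set.range fun y => e (y * z * y⁻¹))
  have hC : Convex ℝ C := convex_convexHull _ _
  have hCne : C.Nonempty := (Set.range_nonempty _).convexHull
  have hUC : ∀ k, ∀ w ∈ C, U k w ∈ C := by
    intro k w hw
    have : C ⊆ (U k).restrictScalars ℝ ⁻¹' C := by
      refine convexHull_min ?_ (hC.linear_preimage _)
      rintro _ ⟨y, rfl⟩
      refine subset_convexHull _ _ ⟨k * y, ?_⟩
      simp only [LinearMap.coe_restrictScalars, hU]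
      congr 1
      group
    exact this hw
  have hdom : ∀ w ∈ C, ∀ (n : ℕ) (lam : Fin n → ℂ) (g : Fin n → G),
      ‖∑ i, ∑ j, lam i * (starRingEnd ℂ) (lam j) * ⟪e ((g j)⁻¹ * g i)⁻¹, w⟫_ℂ‖ ≤
        (∑ i, ∑ j, lam i * (starRingEnd ℂ) (lam j) * τ ((g j)⁻¹ * g i)).re := by
    intro w hw n lam g
    let L : V →ₗ[ℂ] ℂ := ∑ i, ∑ j, (lam i * (starRingEnd ℂ) (lam j)) •
      (innerSL ℂ (e ((g j)⁻¹ * g i)⁻¹)).toLinearMap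
    have hL : ∀ v, L v =
        ∑ i, ∑ j, lam i * (starRingEnd ℂ) (lam j) * ⟪e ((g j)⁻¹ * g i)⁻¹, v⟫_ℂ := by
      intro v
      simp [L, LinearMap.sum_apply]
    have hsub : C ⊆ L.restrictScalars ℝ ⁻¹' Metric.closedBall 0
        (∑ i, ∑ j, lam i * (starRingEnd ℂ) (lam j) * τ ((g j)⁻¹ * g i)).re := by
      refine convexHull_min ?_ ((convex_closedBall _ _).linear_preimage _)
      rintro _ ⟨y, rfl⟩
      simp only [Set.mem_preimage, LinearMap.coe_restrictScalars, mem_closedBall_zero_iff, hL]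
      set s := y * z * y⁻¹
      -- Right translation by `s` is isometric because `τ` is a class function.
      have hnorm : ∀ s : G, ⟪∑ j, lam j • e (g j * s), ∑ i, lam i • e (g i * s)⟫_ℂ =
          ∑ i, ∑ j, lam i * (starRingEnd ℂ) (lam j) * τ ((g j)⁻¹ * g i) := by
        intro s
        simp only [sum_inner, inner_sum, inner_smul_left, inner_smul_right, he, Finset.mul_sum]
        refine Finset.sum_congr rfl fun i _ => Finset.sum_congr rfl fun j _ => ?_
        rw [← hτ.2.1 ((g j)⁻¹ * g i) s⁻¹]
        simp only [mul_inv_rev, inv_inv, mul_assoc]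
      have hmix : ∑ i, ∑ j, lam i * (starRingEnd ℂ) (lam j) * ⟪e ((g j)⁻¹ * g i)⁻¹, e s⟫_ℂ =
          ⟪∑ j, lam j • e (g j * 1), ∑ i, lam i • e (g i * s)⟫_ℂ := by
        simp only [sum_inner, inner_sum, inner_smul_left, inner_smul_right, he, Finset.mul_sum]
        refine Finset.sum_congr rfl fun i _ => Finset.sum_congr rfl fun j _ => ?_
        simp only [inv_inv, mul_one, mul_assoc]
      rw [hmix]
      refine (norm_inner_le_norm _ _).trans ?_
      have h1 := @inner_self_eq_norm_mul_norm ℂ _ _ _ _ (∑ j, lam j • e (g j * 1))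
      have h2 := @inner_self_eq_norm_mul_norm ℂ _ _ _ _ (∑ j, lam j • e (g j * s))
      rw [hnorm] at h1 h2
      rw [h1] at h2
      have h3 := (mul_self_inj (norm_nonneg _) (norm_nonneg _)).1 h2
      rw [← h3, ← h1]
      rfl
    have := hsub hw
    simpa only [Set.mem_preimage, LinearMap.coe_restrictScalars, mem_closedBall_zero_iff, hL]
      using this
  have hconst : ∀ w ∈ C, ∀ x c, (∀ y, τ (x * (y * z * y⁻¹)) = c) → ⟪e x⁻¹, w⟫_ℂ = c := by
    intro w hw x c hx
    have hsub : C ⊆ (innerSL ℂ (e x⁻¹)).toLinearMap.restrictScalars ℝ ⁻¹' {c} := by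
      refine convexHull_min ?_ ((convex_singleton c).linear_preimage _)
      rintro _ ⟨y, rfl⟩
      simp [he, hx]
    simpa using hsub hw
  -- A sequence in `C` minimizing the norm is asymptotically invariant under conjugation.
  let m : ℝ := sInf ((fun w => ‖w‖ ^ 2) '' C)
  have hbdd : BddBelow ((fun w => ‖w‖ ^ 2) '' C) :=
    ⟨0, by rintro _ ⟨w, _, rfl⟩; positivity⟩
  have hm : ∀ w ∈ C, m ≤ ‖w‖ ^ 2 := fun w hw => csInf_le hbdd ⟨w, hw, rfl⟩
  have hex : ∀ n : ℕ, ∃ w ∈ C, ‖w‖ ^ 2 < m + 1 / (n + 1 : ℝ) := by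
    intro n
    obtain ⟨_, ⟨w, hw, rfl⟩, h⟩ := exists_lt_of_csInf_lt (hCne.image fun w => ‖w‖ ^ 2)
      (lt_add_of_pos_right m (Nat.one_div_pos_of_nat (α := ℝ) (n := n)))
    exact ⟨w, hw, h⟩
  choose w hwC hwm using hex
  have hasym : ∀ k, Filter.Tendsto (fun n => ‖w n - U k (w n)‖) Filter.atTop (nhds 0) := by
    intro k
    have hsq : Filter.Tendsto (fun n => ‖w n - U k (w n)‖ ^ 2) Filter.atTop (nhds 0) := by
      have hlim : Filter.Tendsto (fun n : ℕ => 4 * (1 / (n + 1 : ℝ))) Filter.atTop (nhds 0) := by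
        simpa using (tendsto_one_div_add_atTop_nhds_zero_nat (𝕜 := ℝ)).const_mul 4
      refine squeeze_zero (fun n => by positivity) (fun n => ?_) hlim
      have hp := parallelogram_law_with_norm ℂ (w n) (U k (w n))
      have hmid : (1 / 2 : ℝ) • (w n + U k (w n)) ∈ C := by
        rw [smul_add]
        exact hC (hwC n) (hUC k _ (hwC n)) (by norm_num) (by norm_num) (by norm_num)
      have h1 := hm _ hmid
      rw [norm_smul, Real.norm_of_nonneg (by norm_num)] at h1
      rw [hUn] at hp
      nlinarith [hwm n]
    have := hsq.sqrt
    simpa [Real.sqrt_sq] using this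
  -- A pointwise limit along an ultrafilter replaces weak compactness.
  let F : Ultrafilter ℕ := Filter.hyperfilter ℕ
  have hF : (F : Filter ℕ) ≤ Filter.atTop := by
    rw [← Nat.cofinite_eq_atTop]
    exact Filter.hyperfilter_le_cofinite
  have hlim : ∀ x, ∃ l, Filter.Tendsto (fun n => ⟪e x⁻¹, w n⟫_ℂ) F (nhds l) := by
    intro x
    have hb : ∀ n, ⟪e x⁻¹, w n⟫_ℂ ∈ Metric.closedBall (0 : ℂ) (‖e x⁻¹‖ * (m + 2)) := by
      intro n
      rw [mem_closedBall_zero_iff]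
      refine (norm_inner_le_norm _ _).trans ?_
      have h1 : (1 : ℝ) / (n + 1) ≤ 1 := by
        rw [div_le_one (by positivity)]; linarith [(Nat.cast_nonneg n : (0 : ℝ) ≤ n)]
      gcongr
      nlinarith [hwm n, sq_nonneg (‖w n‖ - 1)]
    obtain ⟨l, _, hl⟩ := (isCompact_closedBall (0 : ℂ) (‖e x⁻¹‖ * (m + 2))).ultrafilter_le_nhds
      (F.map fun n => ⟪e x⁻¹, w n⟫_ℂ) (Filter.le_principal_iff.2 
        (Ultrafilter.mem_map.2 (Filter.univ_mem' hb)))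
    exact ⟨l, hl⟩
  choose φ hφ using hlim
  refine ⟨φ, fun g h => ?_, fun n lam g => ?_, fun x c hx => ?_⟩
  · have hUin : ∀ v, ⟪e (h * g * h⁻¹)⁻¹, U h v⟫_ℂ = ⟪e g⁻¹, v⟫_ℂ := by
      intro v
      have : e (h * g * h⁻¹)⁻¹ = U h (e g⁻¹) := by
        rw [hU]; congr 1; group
      rw [this]
      exact (LinearMap.norm_map_iff_inner_map_map (U h)).1 (hUn h) _ _
    have hzero : Filter.Tendsto (fun n => ⟪e (h * g * h⁻¹)⁻¹, w n - U h (w n)⟫_ℂ) F (nhds 0) := by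
      refine squeeze_zero_norm (fun n => norm_inner_le_norm _ _) ?_
      simpa using ((hasym h).mono_left hF).const_mul ‖e (h * g * h⁻¹)⁻¹‖
    have hd := (hφ (h * g * h⁻¹)).sub (hφ g)
    refine sub_eq_zero.1 (tendsto_nhds_unique hd ?_)
    refine hzero.congr fun n => ?_
    rw [inner_sub_right, hUin]
  · have ht : Filter.Tendsto
        (fun k => ∑ i, ∑ j, lam i * (starRingEnd ℂ) (lam j) * ⟪e ((g j)⁻¹ * g i)⁻¹, w k⟫_ℂ) F
        (nhds (∑ i, ∑ j, lam i * (starRingEnd ℂ) (lam j) * φ ((g j)⁻¹ * g i))) :=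
      tendsto_finsetSum _ fun i _ => tendsto_finsetSum _ fun j _ => (hφ _).const_mul _
    exact le_of_tendsto ht.norm (Filter.Eventually.of_forall fun k => hdom _ (hwC k) n lam g)
  · refine tendsto_nhds_unique (hφ x) ?_
    simp only [hconst _ (hwC _) x c hx]
    exact tendsto_const_nhds

theorem extremal_character_of_product_splits
    (Γ Λ : Type*) [Group Γ] [Group Λ]
    (τ : Γ × Λ → ℂ) (hτ : IsExtremalCharacter τ) :
    ∀ (g : Γ) (h : Λ), τ (g, h) = τ (g, 1) * τ (1, h) := by
  intro g h
  have hchar : IsCharacter τ := hτ.1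
  obtain ⟨φ, hφ, hdom, hval⟩ := hchar.exists_average ((1, h) : Γ × Λ)
  have hslice : ∀ a : Γ, φ (a, 1) = τ (a, h) := by
    intro a
    refine hval _ _ fun y => ?_
    -- Conjugation by the `Λ`-component of `y` fixes `(a, 1)`.
    rw [← hchar.2.1 (a, h) (1, y.2)]
    congr 1
    ext <;> simp
  have h1 := hτ.eq_mul_of_dominated hφ hdom (g, 1)
  rw [hslice, Prod.one_eq_mk, hslice] at h1
  rw [h1, mul_comm]
end
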